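/- arXiv:1610.05294 — 3 statements merged into one kernel-verified Lean document; each statement's English description precedes it below -/
import Mathlib

section
/- Let M be a normal topological space with a regular finite Borel measure μ, and let N be a geodesically convex metric space. Then the set of continuous maps M → N is dense in L¹_μ(M,N), the space of measurable maps f : M → N with ∫ dist_N(f(x), 0̂) dμ(x) < ∞, equipped with the distance dist(f,g) = ∫ dist_N(f(x),g(x)) dμ(x). -/
open MeasureTheory Set

/-!
If `f` takes almost all its values in a separable set, it is an `L¹` limit of simple functions. The
finitely many values of a simple function `s` lie on one path `γ`, so `s = γ ∘ h` with
`h : M → [0, 1]`; by Lusin `h` is continuous on a closed set of almost full measure, and Tietze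
extends it from there.

The essential separability of `f` is the serious point. Rounding `f` to the first centre, in a
well-order of `N`, of a `δ`-ball containing it gives a map with all preimages measurable, so it is
enough that a map `q : M → I` with all preimages measurable has countably many values almost
everywhere. Otherwise some compact `K` of positive measure has only null fibres under `q`. A family
of null sets of `I` of least cardinality `κ` with non-null union then replaces `I` by a well-order
`J` of type `κ`, where the null sets are closed under unions of fewer than `κ` of them and include
the initial segments. There are two cases.

* The pushforward measure has an atom, and may be taken two-valued. Take open
  `G a ⊇ q ⁻¹' Iic a` of less than full measure. By `κ`-completeness, cofinally many of the closed
  sets `(G a)ᶜ` have the finite intersection property, so they share a point `x` of `K`, and `q x`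
  has to exceed all those `a`.
* It has no atom. By an exhaustion argument, countably many subsets of `J` define a map
  `p : J → (ι → Bool)` with null fibres. By regularity on `K`, the null set `p '' Iio a` has an open
  neighbourhood `V a` whose preimage has at most half of the measure. The set of all `(a, b)` with
  `p b ∈ V a` is product measurable and contains all pairs with `b < a`, which contradicts Fubini.
-/

section Regularity

open Filter ENNReal Topology

theorem exists_countable_measure_sdiff_sUnion_eq_zero {X : Type*} [MeasurableSpace X]
    (μ : Measure X) [IsFiniteMeasure μ] (ℱ : Set (Set X)) (hℱ : ∀ F ∈ ℱ, MeasurableSet F) :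
    ∃ 𝒞 ⊆ ℱ, 𝒞.Countable ∧ ∀ F ∈ ℱ, μ (F \ ⋃₀ 𝒞) = 0 := by
  let values : Set ℝ≥0∞ := (fun 𝒞 => μ (⋃₀ 𝒞)) '' {𝒞 | 𝒞 ⊆ ℱ ∧ 𝒞.Countable}
  obtain ⟨u, -, hu_lim, hu_mem⟩ :=
    exists_seq_tendsto_sSup (S := values) ⟨_, ∅, ⟨empty_subset _, countable_empty⟩, rfl⟩
      (OrderTop.bddAbove _)
  choose 𝒞 h𝒞 hu using hu_mem
  have hsub : ⋃ n, 𝒞 n ⊆ ℱ := iUnion_subset fun n => (h𝒞 n).1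
  have hcount : (⋃ n, 𝒞 n).Countable := countable_iUnion fun n => (h𝒞 n).2
  have hmeas : MeasurableSet (⋃₀ ⋃ n, 𝒞 n) := .sUnion hcount fun F hF => hℱ F (hsub hF)
  have hsup : sSup values ≤ μ (⋃₀ ⋃ n, 𝒞 n) :=
    le_of_tendsto' hu_lim fun n => (hu n).symm.le.trans <|
      measure_mono (sUnion_subset_sUnion (subset_iUnion 𝒞 n))
  refine ⟨⋃ n, 𝒞 n, hsub, hcount, fun F hF => ?_⟩
  have hinsert : μ (F ∪ ⋃₀ ⋃ n, 𝒞 n) ≤ sSup values :=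
    le_sSup ⟨insert F (⋃ n, 𝒞 n), ⟨insert_subset hF hsub, hcount.insert F⟩,
      congrArg μ (sUnion_insert F _)⟩
  rw [← union_sdiff_right, measure_sdiff subset_union_right hmeas.nullMeasurableSet
    (measure_ne_top μ _)]
  exact tsub_eq_zero_of_le (hinsert.trans hsup)

theorem outerRegular_restrict {X : Type*} [TopologicalSpace X] [MeasurableSpace X]
    [OpensMeasurableSpace X] (μ : Measure X) [IsFiniteMeasure μ] [μ.OuterRegular] (A : Set X) :
    (μ.restrict A).OuterRegular := by
  refine ⟨fun B hB r hr => ?_⟩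
  obtain ⟨U, hBU, hU, -, hUB⟩ :=
    hB.exists_isOpen_sdiff_lt (measure_ne_top μ B) (tsub_pos_of_lt hr).ne'
  refine ⟨U, hBU, hU, ?_⟩
  calc μ.restrict A U ≤ μ.restrict A B + μ.restrict A (U \ B) := by
        conv_lhs => rw [← union_sdiff_cancel hBU]
        exact measure_union_le _ _
    _ ≤ μ.restrict A B + μ (U \ B) := by gcongr; exact Measure.restrict_le_self
    _ < r := by
      rw [add_comm]
      exact lt_tsub_iff_right.1 hUB

theorem exists_isClosed_continuousOn_measure_compl_lt {X Y : Type*} [TopologicalSpace X]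
    [MeasurableSpace X] [OpensMeasurableSpace X] (μ : Measure X) [IsFiniteMeasure μ]
    [μ.OuterRegular] [TopologicalSpace Y] [SecondCountableTopology Y] [MeasurableSpace Y]
    [OpensMeasurableSpace Y] {f : X → Y} (hf : Measurable f) {ε : ℝ≥0∞} (hε : ε ≠ 0) :
    ∃ L, IsClosed L ∧ ContinuousOn f L ∧ μ Lᶜ < ε := by
  let ℬ := TopologicalSpace.countableBasis Y
  have hℬ : TopologicalSpace.IsTopologicalBasis ℬ := TopologicalSpace.isBasis_countableBasis Y
  obtain ⟨δ, hδ_pos, hδ_sum⟩ := ENNReal.exists_pos_sum_of_countable' hε ℬ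
  choose U hU_sub hU_open _ hU_lt using fun B : ℬ =>
    (hf (hℬ.isOpen B.2).measurableSet).exists_isOpen_sdiff_lt (measure_ne_top μ _) (hδ_pos B).ne'
  have hD : μ (⋃ B, U B \ f ⁻¹' B) < ε :=
    (measure_iUnion_le _).trans_lt ((ENNReal.tsum_le_tsum fun B => (hU_lt B).le).trans_lt hδ_sum)
  obtain ⟨W, hDW, hW_open, hW⟩ := Set.exists_isOpen_lt_of_lt _ ε hD
  refine ⟨Wᶜ, hW_open.isClosed_compl, ?_, by rwa [compl_compl]⟩
  refine hℬ.continuousOn_iff.2 fun B hB => ⟨U ⟨B, hB⟩, hU_open _, ?_⟩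
  refine Subset.antisymm (inter_subset_inter_left _ (hU_sub ⟨B, hB⟩)) fun x hx => ⟨?_, hx.2⟩
  by_contra hxB
  exact hx.2 (hDW (mem_iUnion.2 ⟨⟨B, hB⟩, hx.1, hxB⟩))

theorem exists_isOpen_superset_measure_preimage_lt {X Y : Type*} [TopologicalSpace X]
    [MeasurableSpace X] [OpensMeasurableSpace X] (μ : Measure X) [IsFiniteMeasure μ]
    [μ.OuterRegular] {K : Set X} (hK : IsCompact K) (hμK : μ.restrict K = μ)
    [TopologicalSpace Y] [T2Space Y] [SecondCountableTopology Y] [MeasurableSpace Y]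
    [OpensMeasurableSpace Y] {f : X → Y} (hf : Measurable f) {T : Set Y}
    (hT : μ (f ⁻¹' T) = 0) {ε : ℝ≥0∞} (hε : ε ≠ 0) :
    ∃ V ⊇ T, IsOpen V ∧ μ (f ⁻¹' V) < ε := by
  have hε2 : 0 < ε / 2 := (ENNReal.half_pos hε)
  obtain ⟨G, hTG, hG_open, hG⟩ := Set.exists_isOpen_lt_of_lt (f ⁻¹' T) (ε / 2) (hT.trans_lt hε2)
  obtain ⟨L, hL_closed, hfL, hL⟩ :=
    exists_isClosed_continuousOn_measure_compl_lt μ hf hε2.ne'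
  have hKLG : IsCompact (K ∩ (L \ G)) := hK.inter_right (hL_closed.sdiff hG_open)
  have himage : IsCompact (f '' (K ∩ (L \ G))) :=
    hKLG.image_of_continuousOn (hfL.mono fun x hx => hx.2.1)
  have hV_open := himage.isClosed.isOpen_compl
  refine ⟨(f '' (K ∩ (L \ G)))ᶜ, ?_, hV_open, ?_⟩
  · rintro y hy ⟨x, hx, rfl⟩
    exact hx.2.2 (hTG hy)
  · have hsub : f ⁻¹' (f '' (K ∩ (L \ G)))ᶜ ∩ K ⊆ Lᶜ ∪ G := fun x hx => by
      by_contra hxLG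
      rw [mem_union, not_or, notMem_compl_iff] at hxLG
      exact hx.1 ⟨x, ⟨hx.2, hxLG⟩, rfl⟩
    calc μ (f ⁻¹' (f '' (K ∩ (L \ G)))ᶜ)
        = μ (f ⁻¹' (f '' (K ∩ (L \ G)))ᶜ ∩ K) := by
          conv_lhs => rw [← hμK, Measure.restrict_apply (hf hV_open.measurableSet)]
      _ ≤ μ Lᶜ + μ G := (measure_mono hsub).trans (measure_union_le _ _)
      _ < ε := by
        rw [← ENNReal.add_halves ε]
        exact ENNReal.add_lt_add hL hG

end Regularity

section TailComplete

open Filter Cardinal Ordinal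

universe u

/-- Tail completeness of a filter `l` on a linear order `J` of uncountable cardinality `κ` whose
proper initial segments are smaller than `κ`: fewer than `κ` sets of `l` intersect in a set of `l`,
and `l` contains every final segment `Ioi a`. The conditions on `J` are part of the definition, so
that `J` may be any such order rather than the initial ordinal of `κ`. The filters of interest are
those of conull sets. -/
structure IsTailComplete {J : Type u} [LinearOrder J] (l : Filter J) : Prop where
  aleph0_lt_mk : ℵ₀ < #J
  mk_Iio_lt (a : J) : #(Iio a) < #J
  cardinalInterFilter : CardinalInterFilter l #J
  eventually_gt (a : J) : ∀ᶠ b in l, a < b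

theorem mk_finset_lt {α : Type u} {κ : Cardinal.{u}} (hκ : ℵ₀ ≤ κ) (hα : #α < κ) :
    #(Finset α) < κ := by
  cases finite_or_infinite α with
  | inl _ => exact lt_aleph0_of_finite (Finset α) |>.trans_le hκ
  | inr _ => rwa [mk_finset_of_infinite]

namespace IsTailComplete

variable {J : Type u} [LinearOrder J] {l : Filter J}

theorem countableInterFilter (hl : IsTailComplete l) : CountableInterFilter l :=
  have := hl.cardinalInterFilter
  CardinalInterFilter.toCountableInterFilter l hl.aleph0_lt_mk

theorem inf_principal (hl : IsTailComplete l) (s : Set J) : IsTailComplete (l ⊓ 𝓟 s) where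
  aleph0_lt_mk := hl.aleph0_lt_mk
  mk_Iio_lt := hl.mk_Iio_lt
  cardinalInterFilter :=
    have := hl.cardinalInterFilter
    inferInstance
  eventually_gt a := (hl.eventually_gt a).filter_mono inf_le_left

theorem eventually_forall_lt (hl : IsTailComplete l) {p : J → J → Prop}
    (hp : ∀ c, ∀ᶠ b in l, p c b) (a : J) : ∀ᶠ b in l, ∀ c < a, p c b := by
  have := hl.cardinalInterFilter
  have := (eventually_cardinal_forall (hl.mk_Iio_lt a)).2 fun c : Iio a => hp c
  exact this.mono fun b hb c hc => hb ⟨c, hc⟩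

theorem eventually_forall_finset (hl : IsTailComplete l) {p : Finset J → J → Prop} {a : J}
    (hp : ∀ t : Finset J, ↑t ⊆ Iio a → ∀ᶠ b in l, p t b) :
    ∀ᶠ b in l, ∀ t : Finset J, ↑t ⊆ Iio a → p t b := by
  have := hl.cardinalInterFilter
  have hcard : #{t : Finset J // ↑t ⊆ Iio a} < #J :=
    calc #{t : Finset J // ↑t ⊆ Iio a} ≤ #(Finset (Iio a)) :=
          mk_le_of_injective (f := fun t => t.1.subtype (· ∈ Iio a)) fun t t' h => Subtype.ext <| by
            rw [← Finset.subtype_map_of_mem t.2, ← Finset.subtype_map_of_mem t'.2]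
            exact congrArg _ h
      _ < #J := mk_finset_lt hl.aleph0_lt_mk.le (hl.mk_Iio_lt a)
  exact ((eventually_cardinal_forall hcard).2 fun t => hp t t.2).mono fun b hb t ht => hb ⟨t, ht⟩

end IsTailComplete

theorem exists_forall_null_sUnion_ne_zero_cardinalInterFilter_ae {I : Type u} [MeasurableSpace I]
    (ν : Measure I) [NullSingletonClass ν] (hν : ν ≠ 0) :
    ∃ 𝒮 : Set (Set I), (∀ s ∈ 𝒮, ν s = 0) ∧ ν (⋃₀ 𝒮) ≠ 0 ∧ CardinalInterFilter (ae ν) #𝒮 := by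
  obtain ⟨𝒮, ⟨h𝒮_null, h𝒮⟩, h𝒮_min⟩ := exists_minimalFor_of_wellFoundedLT
    (fun 𝒮 : Set (Set I) => (∀ s ∈ 𝒮, ν s = 0) ∧ ν (⋃₀ 𝒮) ≠ 0) (fun 𝒮 => #𝒮)
    ⟨range singleton, by simp, by simpa [iUnion_of_singleton] using hν⟩
  refine ⟨𝒮, h𝒮_null, h𝒮, ⟨fun 𝒯 h𝒯_card h𝒯 => ?_⟩⟩
  rw [mem_ae_iff, compl_sInter]
  by_contra hne
  have hnull : ∀ s ∈ compl '' 𝒯, ν s = 0 := forall_mem_image.2 fun t ht => h𝒯 t ht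
  have hle : #(compl '' 𝒯 : Set (Set I)) ≤ #𝒯 := mk_image_le
  exact (h𝒮_min ⟨hnull, hne⟩ (hle.trans h𝒯_card.le)).not_gt (hle.trans_lt h𝒯_card)

theorem isTailComplete_map_of_null_fibres {I J : Type u} [LinearOrder J] [WellFoundedLT J]
    (hJ : ord #J = typeLT J) (hJ_aleph0 : ℵ₀ < #J) {l : Filter I}
    [CardinalInterFilter l #J] {r : I → J} (hr : ∀ a, ∀ᶠ i in l, r i ≠ a) :
    IsTailComplete (l.map r) where
  aleph0_lt_mk := hJ_aleph0
  mk_Iio_lt a := mk_Iio_lt a hJ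
  cardinalInterFilter := inferInstance
  eventually_gt a := by
    rw [eventually_map]
    have hlt := (eventually_cardinal_forall (mk_Iio_lt a hJ)).2 fun c : Iio a => hr c
    filter_upwards [hlt, hr a] with i hi hia
    exact hia.symm.lt_of_le (not_lt.1 fun h => hi ⟨_, h⟩ rfl)

theorem ae_map_eq_map {I J : Type*} [MeasurableSpace I] [MeasurableSpace J]
    [DiscreteMeasurableSpace J] {ν : Measure I} {r : I → J} (hr : AEMeasurable r ν) :
    ae (ν.map r) = (ae ν).map r :=
  Filter.ext fun _ => mem_ae_map_iff hr .of_discrete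

theorem exists_isTailComplete_ae_map {I : Type u} [MeasurableSpace I] [DiscreteMeasurableSpace I]
    (ν : Measure I) [NullSingletonClass ν] (hν : ν ≠ 0) :
    ∃ (J : Type u) (_ : LinearOrder J) (_ : MeasurableSpace J) (_ : DiscreteMeasurableSpace J)
      (S : Set I) (r : I → J), ν S ≠ 0 ∧ IsTailComplete (ae ((ν.restrict S).map r)) := by
  obtain ⟨𝒮, h𝒮_null, h𝒮, h𝒮_inter⟩ :=
    exists_forall_null_sUnion_ne_zero_cardinalInterFilter_ae ν hν
  let J := (#𝒮).ord.ToType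
  have hJ : #J = #𝒮 := mk_ord_toType _
  obtain ⟨e⟩ := Cardinal.eq.1 hJ
  have h𝒮_aleph0 : ℵ₀ < #𝒮 := by
    by_contra! h
    exact h𝒮 ((measure_sUnion_null_iff (le_aleph0_iff_set_countable.1 h)).2 h𝒮_null)
  have hcover : ∀ i ∈ ⋃₀ 𝒮, ∃ a, i ∈ (e a : Set I) := by
    rintro i ⟨s, hs, his⟩
    exact ⟨e.symm ⟨s, hs⟩, by simpa using his⟩
  have : Nonempty J := by
    obtain ⟨i, hi⟩ := nonempty_of_measure_ne_zero h𝒮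
    exact ⟨(hcover i hi).choose⟩
  choose! r hr using hcover
  let _ : MeasurableSpace J := ⊤
  have : DiscreteMeasurableSpace J := ⟨fun _ => trivial⟩
  refine ⟨J, inferInstance, ⊤, this, ⋃₀ 𝒮, r, h𝒮, ?_⟩
  rw [ae_map_eq_map Measurable.of_discrete.aemeasurable, ae_restrict_eq .of_discrete]
  have : CardinalInterFilter (ae ν) #J := hJ ▸ h𝒮_inter
  refine isTailComplete_map_of_null_fibres (by simp [J]) (hJ ▸ h𝒮_aleph0) fun a => ?_
  rw [eventually_inf_principal]
  filter_upwards [measure_eq_zero_iff_ae_notMem.1 (h𝒮_null _ (e a).2)] with i hia hi hra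
  exact hia (hra ▸ hr i hi)

end TailComplete

section TwoValued

open Filter

variable {X J : Type*} [MeasurableSpace X] {μ : Measure X}

theorem exists_restrict_eventually_restrict_inter_ne_zero [IsFiniteMeasure μ]
    {l : Filter J} [l.NeBot] [CountableInterFilter l] (hl : ∀ s, s ∈ l ∨ sᶜ ∈ l)
    {F : J → Set X} (hF : ∀ a, μ (F a) ≠ 0) :
    ∃ P, μ.restrict P ≠ 0 ∧ ∀ B, MeasurableSet B → μ.restrict P B ≠ 0 →
      ∀ᶠ a in l, μ.restrict P (B ∩ F a) ≠ 0 := by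
  let ℱ : Set (Set X) := {B | MeasurableSet B ∧ ∀ᶠ a in l, μ (B ∩ F a) = 0}
  obtain ⟨𝒞, h𝒞ℱ, h𝒞, hℱ⟩ :=
    exists_countable_measure_sdiff_sUnion_eq_zero μ ℱ fun B hB => hB.1
  have hmeas : MeasurableSet (⋃₀ 𝒞) := .sUnion h𝒞 fun B hB => (h𝒞ℱ hB).1
  have hnull : ∀ᶠ a in l, μ (⋃₀ 𝒞 ∩ F a) = 0 := by
    filter_upwards [(eventually_countable_ball h𝒞).2 fun B hB => (h𝒞ℱ hB).2] with a ha
    rwa [sUnion_eq_biUnion, iUnion₂_inter, measure_biUnion_null_iff h𝒞]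
  refine ⟨(⋃₀ 𝒞)ᶜ, fun h0 => ?_, fun B hB hμB => ?_⟩
  · rw [Measure.restrict_eq_zero] at h0
    obtain ⟨a, ha⟩ := hnull.exists
    refine hF a (measure_mono_null (fun x hx => ?_) (measure_union_null ha h0))
    exact (em (x ∈ ⋃₀ 𝒞)).imp_left fun hx𝒞 => ⟨hx𝒞, hx⟩
  · refine (hl {a | μ.restrict (⋃₀ 𝒞)ᶜ (B ∩ F a) ≠ 0}).resolve_right fun hnot => hμB ?_
    have hdiff : B \ ⋃₀ 𝒞 ∈ ℱ := by
      refine ⟨hB.diff hmeas, ?_⟩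
      filter_upwards [hnot] with a ha
      rw [mem_compl_iff, mem_ofPred_eq, not_not, Measure.restrict_apply' hmeas.compl,
        inter_right_comm] at ha
      exact ha
    rw [Measure.restrict_apply hB, ← Set.sdiff_eq]
    simpa using hℱ _ hdiff

/-- The finite intersection property modulo null sets: finitely many of the sets `F a`, `a ∈ A`,
always intersect in a set of nonzero `μ`-measure. It yields a common point of the `F a` when these
are closed and `μ` is concentrated on a compact set. -/
def HasPositiveFiniteInters (μ : Measure X) (F : J → Set X) (A : Set J) : Prop :=
  ∀ t : Finset J, ↑t ⊆ A → μ (⋂ a ∈ t, F a) ≠ 0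

theorem isOfFiniteCharacter_hasPositiveFiniteInters (μ : Measure X) (F : J → Set X) :
    Order.IsOfFiniteCharacter {A | HasPositiveFiniteInters μ F A} := fun _ =>
  ⟨fun hA _ hBA _ t ht => hA t (ht.trans hBA),
    fun hA t ht => hA t ht t.finite_toSet t subset_rfl⟩

theorem exists_isCofinal_hasPositiveFiniteInters [LinearOrder J] {l : Filter J} [l.NeBot]
    (hl : IsTailComplete l) (hμ : μ ≠ 0) {F : J → Set X} (hF : ∀ a, MeasurableSet (F a))
    (hFl : ∀ B, MeasurableSet B → μ B ≠ 0 → ∀ᶠ a in l, μ (B ∩ F a) ≠ 0) :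
    ∃ A, IsCofinal A ∧ HasPositiveFiniteInters μ F A := by
  classical
  have hempty : HasPositiveFiniteInters μ F ∅ := fun t ht => by
    rw [show t = ∅ by simpa using ht]
    simpa using hμ
  obtain ⟨A, -, hA⟩ :=
    (isOfFiniteCharacter_hasPositiveFiniteInters μ F).exists_maximal hempty
  refine ⟨A, ?_, hA.prop⟩
  by_contra hcof
  obtain ⟨a, ha⟩ : ∃ a, A ⊆ Iio a := by simpa [IsCofinal, subset_def] using hcof
  have hext : ∀ᶠ b in l, ∀ t : Finset J, ↑t ⊆ Iio a → ↑t ⊆ A → μ ((⋂ c ∈ t, F c) ∩ F b) ≠ 0 := by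
    refine hl.eventually_forall_finset fun t _ => eventually_imp_distrib_left.2 fun htA => ?_
    exact hFl _ (t.measurableSet_biInter fun c _ => hF c) (hA.prop t htA)
  obtain ⟨b, hb, hab⟩ := (hext.and (hl.eventually_gt a)).exists
  have hinsert : HasPositiveFiniteInters μ F (insert b A) := fun t ht => by
    have htb : ↑(t.erase b) ⊆ A := by
      rwa [Finset.coe_erase, sdiff_singleton_subset_iff]
    refine mt (fun h0 => measure_mono_null ?_ h0) (hb (t.erase b) (htb.trans ha) htb)
    rw [inter_comm, ← Finset.set_biInter_insert]
    exact biInter_mono (Finset.subset_insert_iff.2 subset_rfl) fun _ _ => subset_rfl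
  exact hab.not_gt (ha (hA.mem_of_prop_insert hinsert))

end TwoValued

section Atomless

universe u

theorem exists_forall_measure_preimage_singleton_eq_zero {J : Type u} [MeasurableSpace J]
    [DiscreteMeasurableSpace J] (ν : Measure J) [IsFiniteMeasure ν]
    (hν : ∀ S, ν S ≠ 0 → ∃ T ⊆ S, ν T ≠ 0 ∧ ν (S \ T) ≠ 0) :
    ∃ (ι : Type u) (_ : Countable ι) (p : J → ι → Bool), ∀ c, ν (p ⁻¹' {c}) = 0 := by
  classical
  let E (T : Set J) : Set (J × J) := T ×ˢ Tᶜ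
  obtain ⟨𝒞, h𝒞, h𝒞_count, hE⟩ :=
    exists_countable_measure_sdiff_sUnion_eq_zero (ν.prod ν) (range E)
      (forall_mem_range.2 fun T => MeasurableSet.of_discrete.prod .of_discrete)
  choose T hT using fun C : 𝒞 => h𝒞 C.2
  let p (j : J) (C : 𝒞) : Bool := decide (j ∈ T C)
  refine ⟨𝒞, h𝒞_count, p, fun c => ?_⟩
  by_contra hfibre
  obtain ⟨A, hA, hνA, hνA'⟩ := hν _ hfibre
  have hsub : A ×ˢ (p ⁻¹' {c} \ A) ⊆ E A \ ⋃₀ 𝒞 := by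
    rintro ⟨i, j⟩ ⟨hi, hj, hjA⟩
    refine ⟨⟨hi, hjA⟩, ?_⟩
    rintro ⟨C, hC, hij⟩
    obtain ⟨hiC, hjC⟩ : (i, j) ∈ E (T ⟨C, hC⟩) := (hT ⟨C, hC⟩).symm ▸ hij
    have hcode := congrFun ((hA hi).trans hj.symm) ⟨C, hC⟩
    exact hjC ((decide_eq_decide.1 hcode).1 hiC)
  have hprod := measure_mono_null hsub (hE _ (mem_range_self A))
  rw [Measure.prod_prod, mul_eq_zero] at hprod
  exact hprod.elim hνA hνA'

theorem measurableSet_mem_of_isOpen {I J Y : Type*} [MeasurableSpace I]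
    [DiscreteMeasurableSpace I] [MeasurableSpace J] [DiscreteMeasurableSpace J]
    [TopologicalSpace Y] [SecondCountableTopology Y]
    (p : J → Y) {G : I → Set Y} (hG : ∀ a, IsOpen (G a)) :
    MeasurableSet {z : I × J | p z.2 ∈ G z.1} := by
  let ℬ := TopologicalSpace.countableBasis Y
  have hℬ : TopologicalSpace.IsTopologicalBasis ℬ := TopologicalSpace.isBasis_countableBasis Y
  have hunion : {z : I × J | p z.2 ∈ G z.1} = ⋃ B ∈ ℬ, {a | B ⊆ G a} ×ˢ (p ⁻¹' B) := by
    ext ⟨a, j⟩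
    simp only [mem_ofPred_eq, mem_iUnion₂, mem_prod, mem_preimage]
    constructor
    · intro h
      obtain ⟨B, hB, hjB, hBG⟩ := hℬ.exists_subset_of_mem_open h (hG a)
      exact ⟨B, hB, hBG, hjB⟩
    · rintro ⟨B, -, hBG, hjB⟩
      exact hBG hjB
  rw [hunion]
  exact .biUnion (TopologicalSpace.countable_countableBasis Y)
    fun B _ => MeasurableSet.of_discrete.prod .of_discrete

theorem eq_zero_of_forall_ae_gt_of_measure_le {J Y : Type*} [LinearOrder J] [MeasurableSpace J]
    [DiscreteMeasurableSpace J] [TopologicalSpace Y] [SecondCountableTopology Y]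
    {ν : Measure J} [IsFiniteMeasure ν] (hgt : ∀ a, ∀ᵐ b ∂ν, a < b) (p : J → Y)
    {G : J → Set Y} (hG : ∀ a, IsOpen (G a)) (hpG : ∀ a, ∀ b < a, p b ∈ G a)
    (hνG : ∀ a, ν (p ⁻¹' G a) ≤ ν univ / 2) : ν = 0 := by
  by_contra hν
  have hmeas := measurableSet_mem_of_isOpen p hG
  have hle : (ν.prod ν) {z | p z.2 ∈ G z.1} ≤ ν univ / 2 * ν univ := by
    rw [Measure.prod_apply hmeas]
    exact (lintegral_mono hνG).trans_eq (lintegral_const _)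
  have hfull : (ν.prod ν) {z | p z.2 ∈ G z.1} = ν univ * ν univ := by
    rw [Measure.prod_apply_symm hmeas, ← lintegral_const]
    refine lintegral_congr fun b => measure_congr (Filter.eventuallyEq_univ.2 ?_)
    filter_upwards [hgt b] with a hab
    exact hpG a b hab
  have hpos : ν univ ≠ 0 := by simpa using hν
  have hlt : ν univ / 2 * ν univ < ν univ * ν univ :=
    (ENNReal.mul_lt_mul_iff_left hpos (measure_ne_top _ _)).2
      (ENNReal.half_lt_self hpos (measure_ne_top _ _))
  exact hlt.not_ge (hfull ▸ hle)

end Atomless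

section NullFibres

open Filter

variable {X J : Type*} [TopologicalSpace X] [MeasurableSpace X] [OpensMeasurableSpace X]
  {μ : Measure X} [IsFiniteMeasure μ] [μ.OuterRegular] {K : Set X} {q : X → J}
  [MeasurableSpace J] [DiscreteMeasurableSpace J]

theorem eq_zero_of_isTailComplete_of_forall_mem_or_compl_mem [LinearOrder J] (hK : IsCompact K)
    (hμK : μ.restrict K = μ) (hq : Measurable q) (hl : IsTailComplete (ae (μ.map q)))
    (hl' : ∀ s, s ∈ ae (μ.map q) ∨ sᶜ ∈ ae (μ.map q)) : μ = 0 := by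
  by_contra hμ
  have : (ae (μ.map q)).NeBot := by
    rwa [ae_neBot, Ne, Measure.map_eq_zero_iff hq.aemeasurable]
  have := hl.countableInterFilter
  have hlt : ∀ a, μ (q ⁻¹' Iic a) < μ univ := fun a => by
    have hnull : μ (q ⁻¹' Iic a) = 0 := by
      rw [← compl_Ioi, preimage_compl]
      exact (mem_ae_map_iff hq.aemeasurable .of_discrete).1 (hl.eventually_gt a)
    rw [hnull]
    exact Measure.measure_univ_pos.2 hμ
  choose G hqG hG_open hG_lt using fun a => Set.exists_isOpen_lt_of_lt _ _ (hlt a)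
  have hGc : ∀ a, μ (G a)ᶜ ≠ 0 := fun a h0 =>
    (hG_lt a).not_ge (by rw [measure_of_measure_compl_eq_zero h0])
  obtain ⟨P, hμP, hPl⟩ := exists_restrict_eventually_restrict_inter_ne_zero hl' hGc
  obtain ⟨A, hA_cof, hA⟩ := exists_isCofinal_hasPositiveFiniteInters hl hμP
    (fun a => (hG_open a).measurableSet.compl) hPl
  have hKA : (K ∩ ⋂ a : A, (G a)ᶜ).Nonempty := by
    refine hK.inter_iInter_nonempty _ (fun a => (hG_open a).isClosed_compl) fun u => ?_
    have hu := hA (u.map (.subtype _)) (by simp)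
    have hu_meas : MeasurableSet (⋂ a ∈ u, (G a)ᶜ) :=
      u.measurableSet_biInter fun a _ => (hG_open a).measurableSet.compl
    rw [inter_comm]
    refine nonempty_of_measure_ne_zero (μ := μ) ?_
    rw [← Measure.restrict_apply hu_meas, hμK]
    refine mt (fun h0 => Measure.absolutelyContinuous_of_le Measure.restrict_le_self ?_) hu
    simpa using h0
  obtain ⟨x, -, hx⟩ := hKA
  obtain ⟨a, haA, hxa⟩ := hA_cof (q x)
  exact mem_iInter.1 hx ⟨a, haA⟩ (hqG a hxa)

theorem eq_zero_of_isTailComplete_of_forall_exists_split [LinearOrder J] (hK : IsCompact K)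
    (hμK : μ.restrict K = μ) (hq : Measurable q)
    (hl : IsTailComplete (ae (μ.map q)))
    (hsplit : ∀ S, μ.map q S ≠ 0 → ∃ T ⊆ S, μ.map q T ≠ 0 ∧ μ.map q (S \ T) ≠ 0) :
    μ = 0 := by
  obtain ⟨ι, hι, p, hp⟩ := exists_forall_measure_preimage_singleton_eq_zero (μ.map q) hsplit
  have hpq : Measurable (p ∘ q) := Measurable.of_discrete.comp hq
  have hnull : ∀ a, μ ((p ∘ q) ⁻¹' (p '' Iio a)) = 0 := fun a => by
    have hne : ∀ᵐ b ∂μ.map q, ∀ c < a, p b ≠ p c :=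
      hl.eventually_forall_lt (fun c => measure_eq_zero_iff_ae_notMem.1 (hp (p c))) a
    rw [measure_eq_zero_iff_ae_notMem]
    filter_upwards [ae_of_ae_map hq.aemeasurable hne] with x hx
    rintro ⟨c, hc, hcx⟩
    exact hx c hc hcx.symm
  rw [← Measure.map_eq_zero_iff hq.aemeasurable]
  by_contra hν
  have hhalf : μ univ / 2 ≠ 0 := by
    simpa using mt (Measure.map_eq_zero_iff hq.aemeasurable).2 hν
  choose V hTV hV_open hV_lt using fun a =>
    exists_isOpen_superset_measure_preimage_lt μ hK hμK hpq (hnull a) hhalf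
  refine hν (eq_zero_of_forall_ae_gt_of_measure_le hl.eventually_gt p hV_open
    (fun a b hb => hTV a (mem_image_of_mem p hb)) fun a => ?_)
  rw [Measure.map_apply hq .of_discrete, Measure.map_apply hq .univ]
  exact (hV_lt a).le

theorem eq_zero_of_isTailComplete [LinearOrder J] (hK : IsCompact K) (hμK : μ.restrict K = μ)
    (hq : Measurable q) (hl : IsTailComplete (ae (μ.map q))) : μ = 0 := by
  by_cases! hsplit : ∀ S, μ.map q S ≠ 0 → ∃ T ⊆ S, μ.map q T ≠ 0 ∧ μ.map q (S \ T) ≠ 0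
  · exact eq_zero_of_isTailComplete_of_forall_exists_split hK hμK hq hl hsplit
  obtain ⟨S, hS, hatom⟩ := hsplit
  have hS_meas : MeasurableSet S := .of_discrete
  have : (μ.restrict (q ⁻¹' S)).OuterRegular := outerRegular_restrict μ _
  have hmap : (μ.restrict (q ⁻¹' S)).map q = (μ.map q).restrict S :=
    (Measure.restrict_map hq hS_meas).symm
  have hμSK : (μ.restrict (q ⁻¹' S)).restrict K = μ.restrict (q ⁻¹' S) := by
    rw [← Measure.restrict_comm (hq hS_meas), hμK]
  have hl_S : IsTailComplete (ae ((μ.restrict (q ⁻¹' S)).map q)) := by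
    rw [hmap, ae_restrict_eq hS_meas]
    exact hl.inf_principal S
  have hl_ultra : ∀ s, s ∈ ae ((μ.restrict (q ⁻¹' S)).map q) ∨
      sᶜ ∈ ae ((μ.restrict (q ⁻¹' S)).map q) := fun s => by
    rw [hmap, mem_ae_iff, mem_ae_iff, compl_compl, Measure.restrict_apply' hS_meas,
      Measure.restrict_apply' hS_meas, or_comm]
    refine or_iff_not_imp_left.2 fun h => ?_
    rw [inter_comm, ← Set.sdiff_eq, ← sdiff_inter_self_eq_sdiff]
    exact hatom _ inter_subset_right h
  have hzero :=
    eq_zero_of_isTailComplete_of_forall_mem_or_compl_mem hK hμSK hq hl_S hl_ultra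
  rw [Measure.restrict_eq_zero, ← Measure.map_apply hq hS_meas] at hzero
  exact absurd hzero hS

theorem eq_zero_of_forall_measure_preimage_singleton_eq_zero (hK : IsCompact K)
    (hμK : μ.restrict K = μ) (hq : Measurable q) (hfibre : ∀ i, μ (q ⁻¹' {i}) = 0) : μ = 0 := by
  by_contra hμ
  have : NullSingletonClass (μ.map q) :=
    ⟨fun i => by rw [Measure.map_apply hq .of_discrete, hfibre]⟩
  obtain ⟨J, _, _, _, S, r, hS, hl⟩ := exists_isTailComplete_ae_map (μ.map q)
    (mt (Measure.map_eq_zero_iff hq.aemeasurable).1 hμ)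
  have hS_meas : MeasurableSet S := .of_discrete
  have : (μ.restrict (q ⁻¹' S)).OuterRegular := outerRegular_restrict μ _
  rw [Measure.restrict_map hq hS_meas, Measure.map_map .of_discrete hq] at hl
  have hzero := eq_zero_of_isTailComplete hK
    (by rw [← Measure.restrict_comm (hq hS_meas), hμK]) (Measurable.of_discrete.comp hq) hl
  rw [Measure.restrict_eq_zero, ← Measure.map_apply hq hS_meas] at hzero
  exact hS hzero

end NullFibres

section EssentialSeparability

open Metric

theorem exists_countable_ae_mem {X I : Type*} [TopologicalSpace X] [MeasurableSpace X]
    [OpensMeasurableSpace X] (μ : Measure X) [IsFiniteMeasure μ] [μ.Regular] {q : X → I}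
    (hq : ∀ S, MeasurableSet (q ⁻¹' S)) : ∃ A : Set I, A.Countable ∧ ∀ᵐ x ∂μ, q x ∈ A := by
  let A : Set I := {i | 0 < μ (q ⁻¹' {i})}
  have hA : A.Countable := Measure.countable_meas_pos_of_disjoint_iUnion
    (fun i => hq {i}) fun i j hij => (disjoint_singleton.2 hij).preimage q
  refine ⟨A, hA, ?_⟩
  by_contra hE
  have hE_meas : MeasurableSet (q ⁻¹' A)ᶜ := (hq A).compl
  obtain ⟨K, hKE, hK, hμK⟩ := hE_meas.exists_lt_isCompact_of_ne_top (measure_ne_top μ _)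
    (pos_iff_ne_zero.2 hE)
  have : (μ.restrict K).OuterRegular := outerRegular_restrict μ K
  have hfibre : ∀ i, μ.restrict K (q ⁻¹' {i}) = 0 := fun i => by
    rw [Measure.restrict_apply (hq {i})]
    by_contra hne
    obtain ⟨x, rfl, hxK⟩ := nonempty_of_measure_ne_zero hne
    exact hKE hxK ((pos_iff_ne_zero.2 hne).trans_le (measure_mono inter_subset_left))
  let _ : MeasurableSpace I := ⊤
  have : DiscreteMeasurableSpace I := ⟨fun _ => trivial⟩
  have hzero := eq_zero_of_forall_measure_preimage_singleton_eq_zero hK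
    (Measure.restrict_restrict_of_subset subset_rfl) (fun S _ => hq S) hfibre
  exact hμK.ne' (Measure.restrict_eq_zero.1 hzero)

theorem locallyFinite_of_pairwise_le_dist {ι N : Type*} [PseudoMetricSpace N] {H : ι → Set N}
    {r : ℝ} (hr : 0 < r) (hH : Pairwise fun i j => ∀ x ∈ H i, ∀ y ∈ H j, r ≤ dist x y) :
    LocallyFinite H := fun x => by
  refine ⟨ball x (r / 2), ball_mem_nhds x (half_pos hr), Set.Subsingleton.finite ?_⟩
  rintro i ⟨y, hy, hyx⟩ j ⟨z, hz, hzx⟩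
  by_contra hij
  linarith [hH hij y hy z hz, dist_triangle_right y z x, mem_ball.1 hyx, mem_ball.1 hzx]

theorem measurableSet_biUnion_ball_sdiff_biUnion_lt {N : Type*} [PseudoMetricSpace N]
    [MeasurableSpace N] [OpensMeasurableSpace N] [LinearOrder N] (δ : ℝ) (S : Set N) :
    MeasurableSet (⋃ a ∈ S, ball a δ \ ⋃ b < a, ball b δ) := by
  let H (n : ℕ) (a : N) : Set N := closedBall a (δ - 1 / (n + 1)) \ ⋃ b < a, ball b δ
  have hH_sep : ∀ n, Pairwise fun a b =>
      ∀ x ∈ H n a, ∀ y ∈ H n b, 1 / ((n : ℝ) + 1) ≤ dist x y := by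
    intro n a b hab x ⟨hxa, hx⟩ y ⟨hyb, hy⟩
    simp only [mem_iUnion, mem_ball, not_exists, not_lt] at hx hy
    rw [mem_closedBall] at hxa hyb
    rcases hab.lt_or_gt with h | h
    · linarith [hy a h, dist_triangle_left y a x]
    · linarith [hx b h, dist_triangle x y b]
  have hclosed : ∀ n, IsClosed (⋃ a : S, H n a) := fun n => by
    have hlf := (locallyFinite_of_pairwise_le_dist (by positivity) (hH_sep n)).comp_injective
      (Subtype.val_injective (p := (· ∈ S)))
    refine hlf.isClosed_iUnion fun a => isClosed_closedBall.sdiff ?_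
    exact isOpen_biUnion fun b _ => isOpen_ball
  have hunion : (⋃ a ∈ S, ball a δ \ ⋃ b < a, ball b δ) = ⋃ n, ⋃ a : S, H n a := by
    have hball (a : N) : ball a δ = ⋃ n : ℕ, closedBall a (δ - 1 / (n + 1)) := by
      ext x
      simp only [mem_ball, mem_iUnion, mem_closedBall]
      refine ⟨fun hx => ?_, fun ⟨n, hn⟩ => hn.trans_lt (sub_lt_self δ Nat.one_div_pos_of_nat)⟩
      obtain ⟨n, hn⟩ := exists_nat_one_div_lt (sub_pos.2 hx)
      exact ⟨n, by linarith⟩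
    rw [iUnion_comm]
    simp only [H, hball, iUnion_sdiff, biUnion_eq_iUnion]
  rw [hunion]
  exact .iUnion fun n => (hclosed n).measurableSet

theorem exists_dist_lt_and_measurableSet_preimage {N : Type*} [PseudoMetricSpace N]
    [MeasurableSpace N] [OpensMeasurableSpace N] {δ : ℝ} (hδ : 0 < δ) :
    ∃ c : N → N, (∀ x, dist x (c x) < δ) ∧ ∀ S, MeasurableSet (c ⁻¹' S) := by
  obtain ⟨_, _⟩ := exists_wellFoundedLT N
  have hne (x : N) : {a | dist x a < δ}.Nonempty := ⟨x, by simpa using hδ⟩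
  let c (x : N) : N := wellFounded_lt.min {a | dist x a < δ} (hne x)
  have hc_lt (x : N) : dist x (c x) < δ := wellFounded_lt.min_mem _ (hne x)
  refine ⟨c, hc_lt, fun S => ?_⟩
  have hc : c ⁻¹' S = ⋃ a ∈ S, ball a δ \ ⋃ b < a, ball b δ := by
    ext x
    simp only [mem_preimage, mem_iUnion, Set.mem_sdiff, mem_ball, exists_prop, not_exists]
    constructor
    · exact fun hx => ⟨c x, hx, hc_lt x,
        fun b ⟨hb, hxb⟩ => wellFounded_lt.not_lt_min {a | dist x a < δ} hxb hb⟩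
    · rintro ⟨a, haS, hxa, hmin⟩
      have hac : a = c x := le_antisymm
        (not_lt.1 fun h => hmin (c x) ⟨h, hc_lt x⟩)
        (not_lt.1 (wellFounded_lt.not_lt_min {a | dist x a < δ} hxa))
      exact hac ▸ haS
  rw [hc]
  exact measurableSet_biUnion_ball_sdiff_biUnion_lt δ S

theorem aestronglyMeasurable_of_measurable {X N : Type*} [TopologicalSpace X] [MeasurableSpace X]
    [OpensMeasurableSpace X] (μ : Measure X) [IsFiniteMeasure μ] [μ.Regular] [PseudoMetricSpace N]
    [MeasurableSpace N] [BorelSpace N] {f : X → N} (hf : Measurable f) :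
    AEStronglyMeasurable f μ := by
  have hcentres : ∀ n : ℕ, ∃ A : Set N, A.Countable ∧
      ∀ᵐ x ∂μ, ∃ a ∈ A, dist (f x) a < 1 / (n + 1) := fun n => by
    obtain ⟨c, hc, hc_meas⟩ := exists_dist_lt_and_measurableSet_preimage (N := N)
      (Nat.one_div_pos_of_nat (n := n))
    obtain ⟨A, hA, hfA⟩ := exists_countable_ae_mem μ (q := c ∘ f) fun S => hf (hc_meas S)
    exact ⟨A, hA, hfA.mono fun x hx => ⟨_, hx, hc (f x)⟩⟩
  choose A hA hfA using hcentres
  refine aestronglyMeasurable_iff_aemeasurable_separable.2 ⟨hf.aemeasurable, closure (⋃ n, A n),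
    (countable_iUnion hA).isSeparable.closure, ?_⟩
  filter_upwards [ae_all_iff.2 hfA] with x hx
  refine Metric.mem_closure_iff.2 fun ε hε => ?_
  obtain ⟨n, hn⟩ := exists_nat_one_div_lt hε
  obtain ⟨a, ha, hxa⟩ := hx n
  exact ⟨a, mem_iUnion_of_mem n ha, hxa.trans hn⟩

end EssentialSeparability

section Approximation

open Filter ENNReal Topology unitInterval

theorem exists_simpleFunc_lintegral_edist_lt {X N : Type*} [MeasurableSpace X] {μ : Measure X}
    [PseudoMetricSpace N] [MeasurableSpace N] [OpensMeasurableSpace N]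
    {f : X → N} (hf : Measurable f) (hf_ae : AEStronglyMeasurable f μ) {o : N}
    (hfo : ∫⁻ x, edist (f x) o ∂μ ≠ ⊤) {ε : ℝ≥0∞} (hε : ε ≠ 0) :
    ∃ s : SimpleFunc X N, ∫⁻ x, edist (f x) (s x) ∂μ < ε := by
  obtain ⟨t, ht, hft⟩ := hf_ae.isSeparable_ae_range
  have : TopologicalSpace.SeparableSpace (insert o t : Set N) :=
    ((finite_singleton o).isSeparable.union ht).separableSpace
  let s (n : ℕ) := SimpleFunc.approxOn f hf (insert o t) o (mem_insert o t) n
  have hlim : Tendsto (fun n => ∫⁻ x, edist (f x) (s n x) ∂μ) atTop (𝓝 (∫⁻ _, 0 ∂μ)) := by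
    refine tendsto_lintegral_of_dominated_convergence' (fun x => edist (f x) o)
      (fun n => hf_ae.edist (s n).aestronglyMeasurable) (fun n => .of_forall fun x => ?_) hfo ?_
    · simpa only [edist_comm] using SimpleFunc.edist_approxOn_le hf (mem_insert o t) x n
    · filter_upwards [hft] with x hx
      have hs := SimpleFunc.tendsto_approxOn hf (mem_insert o t)
        (subset_closure (mem_insert_of_mem o hx))
      rw [← edist_self (f x)]
      exact tendsto_const_nhds.edist hs
  rw [lintegral_zero] at hlim
  obtain ⟨n, hn⟩ := (hlim.eventually_lt_const (pos_iff_ne_zero.2 hε)).exists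
  exact ⟨s n, hn⟩

theorem exists_continuousMap_unitInterval_subset_range {N : Type*} [TopologicalSpace N]
    [PathConnectedSpace N] {t : Set N} (ht : t.Finite) : ∃ γ : C(I, N), t ⊆ range γ := by
  obtain ⟨n, p, -, rfl⟩ := ht.fin_param
  cases n with
  | zero =>
    rw [range_eq_empty]
    exact ⟨.const I (Classical.arbitrary N), empty_subset _⟩
  | succ n =>
    obtain ⟨γ, hγ⟩ := PathConnectedSpace.exists_path_through_family p
    exact ⟨γ, range_subset_iff.2 hγ⟩

theorem exists_continuousMap_lintegral_edist_simpleFunc_lt {X N : Type*} [TopologicalSpace X]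
    [NormalSpace X] [MeasurableSpace X] [OpensMeasurableSpace X] (μ : Measure X)
    [IsFiniteMeasure μ] [μ.OuterRegular] [PseudoMetricSpace N] [PathConnectedSpace N]
    (s : SimpleFunc X N) {ε : ℝ≥0∞} (hε : ε ≠ 0) :
    ∃ g : C(X, N), ∫⁻ x, edist (s x) (g x) ∂μ < ε := by
  obtain ⟨γ, hγ⟩ := exists_continuousMap_unitInterval_subset_range s.finite_range
  let θ : N → I := Function.invFun γ
  have hθ (x : X) : γ (θ (s x)) = s x := Function.invFun_eq (hγ (mem_range_self x))
  have hdiam : Metric.ediam (range γ) ≠ ⊤ := (isCompact_range γ.continuous).isBounded.ediam_ne_top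
  obtain ⟨η, hη, hη_lt⟩ := ENNReal.exists_pos_mul_lt hdiam hε
  obtain ⟨L, hL_closed, hL_cont, hL⟩ :=
    exists_isClosed_continuousOn_measure_compl_lt μ (s.map θ).measurable hη.ne'
  obtain ⟨h, hh⟩ := ContinuousMap.exists_restrict_eq hL_closed
    ⟨L.domRestrict (s.map θ), continuousOn_iff_continuous_domRestrict.1 hL_cont⟩
  have heq {x : X} (hx : x ∈ L) : γ (h x) = s x := by
    have hhx : h x = s.map θ x := DFunLike.congr_fun hh ⟨x, hx⟩
    rw [hhx, SimpleFunc.map_apply, hθ]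
  refine ⟨γ.comp h, ?_⟩
  calc ∫⁻ x, edist (s x) (γ (h x)) ∂μ
      ≤ ∫⁻ x, Lᶜ.indicator (fun _ => Metric.ediam (range γ)) x ∂μ := by
        refine lintegral_mono fun x => ?_
        by_cases hx : x ∈ L
        · rw [heq hx, edist_self]
          exact zero_le
        · rw [indicator_of_mem (mem_compl hx), ← hθ x]
          exact Metric.edist_le_ediam_of_mem (mem_range_self _) (mem_range_self _)
    _ = Metric.ediam (range γ) * μ Lᶜ := lintegral_indicator_const hL_closed.measurableSet.compl _
    _ ≤ Metric.ediam (range γ) * η := by gcongr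
    _ < ε := by rwa [mul_comm]

theorem stmt_2_general {M N : Type*} [TopologicalSpace M] [NormalSpace M]
    [MeasurableSpace M] [OpensMeasurableSpace M]
    (μ : Measure M) [IsFiniteMeasure μ] [μ.Regular]
    [PseudoMetricSpace N] [PathConnectedSpace N] [MeasurableSpace N] [BorelSpace N] (o : N)
    (f : M → N) (hf : Measurable f)
    (hfL1 : ∫⁻ x, ENNReal.ofReal (dist (f x) o) ∂μ < ⊤)
    (ε : ℝ) (hε : 0 < ε) :
    ∃ g : M → N, Continuous g ∧
      (∫⁻ x, ENNReal.ofReal (dist (g x) o) ∂μ < ⊤) ∧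
      ∫⁻ x, ENNReal.ofReal (dist (f x) (g x)) ∂μ < ENNReal.ofReal ε := by
  simp only [← edist_dist] at hfL1 ⊢
  have hε2 : ENNReal.ofReal ε / 2 ≠ 0 := (ENNReal.half_pos (ofReal_pos.2 hε).ne').ne'
  have hf_ae : AEStronglyMeasurable f μ := aestronglyMeasurable_of_measurable μ hf
  obtain ⟨s, hs⟩ := exists_simpleFunc_lintegral_edist_lt hf hf_ae hfL1.ne hε2
  obtain ⟨g, hg⟩ := exists_continuousMap_lintegral_edist_simpleFunc_lt μ s hε2
  have hfg : ∫⁻ x, edist (f x) (g x) ∂μ < ENNReal.ofReal ε :=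
    calc ∫⁻ x, edist (f x) (g x) ∂μ
        ≤ ∫⁻ x, edist (f x) (s x) + edist (s x) (g x) ∂μ := by gcongr; exact edist_triangle ..
      _ = ∫⁻ x, edist (f x) (s x) ∂μ + ∫⁻ x, edist (s x) (g x) ∂μ :=
        lintegral_add_left' (hf_ae.edist s.aestronglyMeasurable) _
      _ < ENNReal.ofReal ε := (ENNReal.add_lt_add hs hg).trans_eq (ENNReal.add_halves _)
  refine ⟨g, g.continuous, ?_, hfg⟩
  calc ∫⁻ x, edist (g x) o ∂μ
      ≤ ∫⁻ x, edist (f x) (g x) + edist (f x) o ∂μ := by gcongr; exact edist_triangle_left ..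
    _ = ∫⁻ x, edist (f x) (g x) ∂μ + ∫⁻ x, edist (f x) o ∂μ :=
      lintegral_add_right' _ (hf_ae.edist aestronglyMeasurable_const)
    _ < ⊤ := ENNReal.add_lt_top.2 ⟨hfg.trans ofReal_lt_top, hfL1⟩

end Approximation

/-- Continuous maps are dense in `L¹_μ(M,N)`: for `M` a normal topological space with a
regular finite Borel measure `μ`, `N` a geodesically convex metric space with base point `o`,
every measurable `f : M → N` with `∫ dist(f x, o) dμ < ∞` can be approximated in the `L¹`
distance by continuous maps belonging to `L¹_μ(M,N)`. -/
theorem stmt_2 {M N : Type*} [TopologicalSpace M] [NormalSpace M]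
    [MeasurableSpace M] [BorelSpace M]
    (μ : Measure M) [IsFiniteMeasure μ] [μ.Regular]
    [MetricSpace N] [MeasurableSpace N] [BorelSpace N] (o : N)
    (hconv : ∃ τ : ℝ, 1 ≤ τ ∧ ∀ u v : N, ∃ γ : ℝ → N,
      ContinuousOn γ (Icc 0 1) ∧ γ 0 = u ∧ γ 1 = v ∧
      ∀ s ∈ Icc (0:ℝ) 1, ∀ t ∈ Icc (0:ℝ) 1, dist (γ s) (γ t) ≤ τ * dist u v)
    (f : M → N) (hf : Measurable f)
    (hfL1 : ∫⁻ x, ENNReal.ofReal (dist (f x) o) ∂μ < ⊤)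
    (ε : ℝ) (hε : 0 < ε) :
    ∃ g : M → N, Continuous g ∧
      (∫⁻ x, ENNReal.ofReal (dist (g x) o) ∂μ < ⊤) ∧
      ∫⁻ x, ENNReal.ofReal (dist (f x) (g x)) ∂μ < ENNReal.ofReal ε := by
  obtain ⟨_, -, hpath⟩ := hconv
  have : PathConnectedSpace N := ⟨⟨o⟩, fun u v =>
    let ⟨_, hγ, h0, h1, _⟩ := hpath u v
    ⟨.ofLine hγ h0 h1⟩⟩
  exact stmt_2_general μ o f hf hfL1 ε hε
end

section
/- Let L be a geodesically convex metric space, and (K, 𝔅_K, μ_K) a probability space where K is a normal topological space, 𝔅_K its Borel σ-algebra, and μ_K regular. Let H_{j,t} : L → L and h_j : K → K (j ∈ ℕ, t ∈ K) be maps such that H_{j,t}(x) → x uniformly in t and x, h_j(t) → t uniformly in t, and each h_j has Jacobian with respect to μ_K uniformly bounded. Then for every bounded measurable map ψ : K → L, lim_j ∫ dist_L(ψ(t), H_{j,t}(ψ(h_j(t)))) dμ_K(t) = 0. -/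
open MeasureTheory Filter Set
open scoped ENNReal

/-!
A Borel map `ψ` from a compact metric space to a metric space has separable range: otherwise
uncountably many disjoint balls would pull back to disjoint nonempty sets all of whose unions are
Borel; any choice of one representative in each is then measurable, so its range would be an
uncountable Borel set all of whose subsets are Borel, although it has `2 ^ 𝔠` subsets and there are
only `𝔠` Borel sets. Since a finite regular measure lives on a σ-compact set, `ψ` is almost
everywhere a limit of simple functions.

Embedding `L` isometrically into a Banach space, `ψ` can be approximated in `L^p` by a bounded
continuous `g`. Composing with `h_j` inflates the approximation error by at most a power of the
Jacobian bound, uniformly in `j`, while `g ∘ h_j → g` in `L^p` by bounded convergence.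
The maps `H_{j,t}` only add a uniformly small error.
-/

open TopologicalSpace
open scoped Cardinal NNReal Topology BoundedContinuousFunction

section StandardBorel

variable {X : Type*} [MeasurableSpace X]

theorem mk_measurableSet_le_continuum [MeasurableSpace.CountablyGenerated X] :
    #{s : Set X | MeasurableSet s} ≤ 𝔠 := by
  obtain ⟨b, hb, hgen⟩ := MeasurableSpace.CountablyGenerated.isCountablyGenerated (α := X)
  rw [hgen]
  exact MeasurableSpace.cardinal_measurableSet_le_continuum
    ((Cardinal.le_aleph0_iff_set_countable.2 hb).trans Cardinal.aleph0_le_continuum)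

variable [StandardBorelSpace X]

theorem countable_of_standardBorelSpace_of_discreteMeasurableSpace [DiscreteMeasurableSpace X] :
    Countable X := by
  by_contra hX
  have hcard : #X = 𝔠 := by
    simpa using (PolishSpace.measurableEquivNatBoolOfNotCountable hX).toEquiv.lift_cardinal_eq
  have hle : #(Set X) ≤ 𝔠 := by
    simpa [MeasurableSet.of_discrete] using mk_measurableSet_le_continuum (X := X)
  rw [Cardinal.mk_set, hcard] at hle
  exact (Cardinal.cantor 𝔠).not_ge hle

theorem countable_range_of_forall_measurableSet_preimage {I : Type*} {p : X → I}
    (hp : ∀ S, MeasurableSet (p ⁻¹' S)) : (range p).Countable := by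
  let r : X → X := rangeSplitting p ∘ rangeFactorization p
  have hpr (x : X) : p (r x) = p x := apply_rangeSplitting p _
  have hr (S : Set X) : MeasurableSet (r ⁻¹' S) := by
    convert! hp (Subtype.val '' (rangeSplitting p ⁻¹' S)) using 1
    ext x
    simp [r, rangeFactorization]
  let D : Set X := {x | r x = x}
  -- `r` is a measurable idempotent, so `D` is a Borel transversal of the fibres of `p`.
  have hD : MeasurableSet D := measurableSet_eq_fun (fun S _ ↦ hr S) measurable_id
  have := hD.standardBorel
  have : DiscreteMeasurableSpace D := by
    refine ⟨fun S ↦ ?_⟩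
    have hS : S = Subtype.val ⁻¹' (r ⁻¹' (Subtype.val '' S)) := by
      ext ⟨x, hx⟩
      have hx' : r x = x := hx
      simp [hx, hx']
    rw [hS]
    exact measurable_subtype_coe (hr _)
  have := countable_of_standardBorelSpace_of_discreteMeasurableSpace (X := D)
  refine (countable_range fun x : D ↦ p x).mono ?_
  rintro _ ⟨x, rfl⟩
  exact ⟨⟨r x, congrArg (rangeSplitting p) (Subtype.ext (hpr x))⟩, hpr x⟩

theorem countable_of_pairwise_disjoint_of_measurableSet_biUnion {I : Type*} {A : I → Set X}
    (hne : ∀ i, (A i).Nonempty) (hdisj : Pairwise (Function.onFun Disjoint A))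
    (hmeas : ∀ S : Set I, MeasurableSet (⋃ i ∈ S, A i)) : Countable I := by
  have := (by simpa using hmeas univ : MeasurableSet (⋃ i, A i)).standardBorel
  choose p hp using fun x : ⋃ i, A i ↦ mem_iUnion.1 x.2
  have hp_eq {x : ⋃ i, A i} {i : I} (hx : x.1 ∈ A i) : p x = i := by
    by_contra hi
    exact disjoint_left.1 (hdisj hi) (hp x) hx
  have hrange : range p = univ := by
    refine eq_univ_of_forall fun i ↦ ?_
    obtain ⟨x, hx⟩ := hne i
    exact ⟨⟨x, mem_iUnion_of_mem i hx⟩, hp_eq hx⟩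
  rw [← countable_univ_iff, ← hrange]
  refine countable_range_of_forall_measurableSet_preimage fun S ↦ ?_
  convert! measurable_subtype_coe (hmeas S) using 1
  ext x
  simp only [mem_preimage, mem_iUnion, exists_prop]
  exact ⟨fun hx ↦ ⟨p x, hx, hp x⟩, fun ⟨i, hi, hx⟩ ↦ (hp_eq hx).symm ▸ hi⟩

end StandardBorel

section Separable

theorem exists_maximal_isSeparated {X : Type*} [PseudoEMetricSpace X] (ε : ℝ≥0∞) (s : Set X) :
    ∃ N, Maximal (fun N ↦ N ⊆ s ∧ Metric.IsSeparated ε N) N := by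
  refine zorn_subset {N | N ⊆ s ∧ Metric.IsSeparated ε N} fun c hc hchain ↦
    ⟨⋃₀ c, ⟨sUnion_subset fun N hN ↦ (hc hN).1, ?_⟩, fun N ↦ subset_sUnion_of_mem⟩
  exact (pairwise_sUnion hchain.directedOn).2 fun N hN ↦ (hc hN).2

theorem isSeparable_of_forall_isSeparated_countable {X : Type*} [PseudoEMetricSpace X] {s : Set X}
    (hs : ∀ ε : ℝ≥0, 0 < ε → ∀ N ⊆ s, Metric.IsSeparated ε N → N.Countable) : IsSeparable s := by
  obtain ⟨t, -, ht, hst⟩ := EMetric.subset_countable_closure_of_almost_dense_set s fun ε hε ↦ by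
    obtain ⟨δ, hδ, hδε⟩ := ENNReal.lt_iff_exists_nnreal_btwn.1 hε
    obtain ⟨N, hN⟩ := exists_maximal_isSeparated (δ : ℝ≥0∞) s
    refine ⟨N, hs δ (by exact_mod_cast hδ) N hN.1.1 hN.1.2, ?_⟩
    refine (Metric.isCover_iff_subset_iUnion_closedEBall.1 (.of_maximal_isSeparated hN)).trans ?_
    exact iUnion₂_mono fun x _ ↦ Metric.closedEBall_subset_closedEBall hδε.le
  exact ⟨t, ht, hst⟩

variable {X Y : Type*} [MeasurableSpace X] [PseudoMetricSpace Y] [MeasurableSpace Y]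

theorem isSeparable_range_of_measurable_of_standardBorelSpace [StandardBorelSpace X]
    [OpensMeasurableSpace Y] {f : X → Y} (hf : Measurable f) : IsSeparable (range f) := by
  refine isSeparable_of_forall_isSeparated_countable fun ε hε N hN hsep ↦ ?_
  refine countable_coe_iff.1 <| countable_of_pairwise_disjoint_of_measurableSet_biUnion
    (A := fun y : N ↦ f ⁻¹' Metric.ball y (ε / 2)) (fun y ↦ ?_) (fun y z hyz ↦ ?_) fun S ↦ ?_
  · obtain ⟨x, hx⟩ := hN y.2
    exact ⟨x, by simpa [hx] using hε⟩
  · refine (Metric.ball_disjoint_ball ?_).preimage f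
    have : (ε : ℝ≥0∞) < edist (y : Y) z := hsep y.2 z.2 (Subtype.coe_ne_coe.2 hyz)
    rw [edist_nndist, ENNReal.coe_lt_coe] at this
    rw [add_halves]
    exact_mod_cast this.le
  · rw [← preimage_iUnion₂]
    exact hf (isOpen_biUnion fun _ _ ↦ Metric.isOpen_ball).measurableSet

end Separable

section SigmaCompact

variable {K : Type*} [TopologicalSpace K] [MeasurableSpace K] (μ : Measure K) [IsFiniteMeasure μ]
  [μ.InnerRegularCompactLTTop]

theorem exists_seq_isCompact_measure_compl_iUnion_eq_zero [T2Space K] [OpensMeasurableSpace K] :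
    ∃ C : ℕ → Set K, (∀ n, IsCompact (C n)) ∧ μ (⋃ n, C n)ᶜ = 0 := by
  obtain ⟨u, -, hu_pos, hu⟩ := exists_seq_strictAnti_tendsto' (zero_lt_one (α := ℝ≥0∞))
  choose C _ hC hCu using fun n ↦
    MeasurableSet.univ.exists_isCompact_sdiff_lt (measure_ne_top μ univ) (hu_pos n).1.ne'
  refine ⟨C, hC, le_antisymm (ge_of_tendsto' hu fun n ↦ ?_) bot_le⟩
  refine (measure_mono ?_).trans (hCu n).le
  rw [← compl_eq_univ_sdiff]
  exact compl_subset_compl.2 (subset_iUnion C n)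

theorem aestronglyMeasurable_of_measurable_of_metrizable [MetrizableSpace K] [BorelSpace K]
    {Y : Type*} [PseudoMetricSpace Y] [MeasurableSpace Y] [BorelSpace Y] {f : K → Y}
    (hf : Measurable f) : AEStronglyMeasurable f μ := by
  let := metrizableSpaceMetric K
  obtain ⟨C, hC, hμ⟩ := exists_seq_isCompact_measure_compl_iUnion_eq_zero μ
  have hsep (n : ℕ) : IsSeparable (f '' C n) := by
    have := isCompact_iff_compactSpace.1 (hC n)
    rw [image_eq_range]
    exact isSeparable_range_of_measurable_of_standardBorelSpace (hf.comp measurable_subtype_coe)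
  refine aestronglyMeasurable_iff_aemeasurable_separable.2
    ⟨hf.aemeasurable, ⋃ n, f '' C n, .iUnion hsep, ?_⟩
  filter_upwards [mem_ae_iff.2 hμ] with t ht
  rw [← image_iUnion]
  exact mem_image_of_mem f ht

end SigmaCompact

section Lp

variable {α β ι E : Type*} {mα : MeasurableSpace α} {mβ : MeasurableSpace β} {μ : Measure α}
  {ν : Measure β} {p C : ℝ≥0∞} {l : Filter ι} [NormedAddCommGroup E]

theorem tendsto_eLpNorm_zero_of_norm_le [IsFiniteMeasure μ] [l.IsCountablyGenerated] (hp : p ≠ ∞)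
    {f : ι → α → E} {M : ℝ} (hf : ∀ i, AEStronglyMeasurable (f i) μ)
    (hM : ∀ i, ∀ᵐ x ∂μ, ‖f i x‖ ≤ M)
    (hlim : ∀ᵐ x ∂μ, Tendsto (fun i ↦ f i x) l (𝓝 0)) :
    Tendsto (fun i ↦ eLpNorm (f i) p μ) l (𝓝 0) := by
  obtain rfl | hp0 := eq_or_ne p 0
  · simpa using tendsto_const_nhds
  have hp_pos : 0 < p.toReal := ENNReal.toReal_pos hp0 hp
  have hzero {q : ℝ} (hq : 0 < q) : Tendsto (fun a : ℝ≥0∞ ↦ a ^ q) (𝓝 0) (𝓝 0) := by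
    simpa [hq] using (ENNReal.continuous_rpow_const (y := q)).tendsto 0
  simp only [eLpNorm_eq_lintegral_rpow_enorm_toReal hp0 hp]
  refine (hzero (one_div_pos.2 hp_pos)).comp ?_
  rw [← lintegral_zero (μ := μ)]
  refine tendsto_lintegral_filter_of_dominated_convergence'
    (fun _ ↦ ENNReal.ofReal M ^ p.toReal) (.of_forall fun i ↦ (hf i).enorm.pow_const _)
    (.of_forall fun i ↦ (hM i).mono fun x hx ↦ ?_) ?_ ?_
  · gcongr
    rw [← ofReal_norm]
    exact ENNReal.ofReal_le_ofReal hx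
  · simp [lintegral_const, ENNReal.mul_eq_top, hp_pos.not_gt]
  · filter_upwards [hlim] with x hx
    exact (hzero hp_pos).comp (by simpa using hx.enorm)

theorem eLpNorm_comp_le_of_map_le_smul {h : α → β} (hh : AEMeasurable h μ)
    (hle : μ.map h ≤ C • ν) {f : β → E} (hf : AEStronglyMeasurable f ν) :
    eLpNorm (f ∘ h) p μ ≤ C ^ (1 / p).toReal * eLpNorm f p ν := by
  rw [← eLpNorm_map_measure (hf.mono_ac (Measure.absolutelyContinuous_of_le_smul hle)) hh]
  exact eLpNorm_le_of_measure_le_smul hle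

theorem map_le_smul_of_lintegral_comp_le {h : α → β} (hh : Measurable h)
    (hle : ∀ φ : β → ℝ≥0∞, Measurable φ → ∫⁻ t, φ (h t) ∂μ ≤ C * ∫⁻ t, φ t ∂ν) :
    μ.map h ≤ C • ν := by
  refine Measure.le_iff.2 fun s hs ↦ ?_
  simpa [← lintegral_indicator_one hs, lintegral_map (measurable_one.indicator hs) hh]
    using hle _ (measurable_one.indicator hs)

theorem memLp_dist_of_isBounded_range {Y : Type*} [PseudoMetricSpace Y] [IsFiniteMeasure μ]
    {f : α → Y} (hf : AEStronglyMeasurable f μ) (hbdd : Bornology.IsBounded (range f)) (y : Y) :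
    MemLp (fun t ↦ dist (f t) y) p μ := by
  obtain ⟨M, hM⟩ := hbdd.subset_closedBall y
  refine .of_bound (hf.dist aestronglyMeasurable_const) M (.of_forall fun t ↦ ?_)
  simpa using hM (mem_range_self t)

end Lp

section Composition

variable {K ι E : Type*} [TopologicalSpace K] [MeasurableSpace K] {μ : Measure K}
  [IsFiniteMeasure μ] {p C : ℝ≥0∞} {l : Filter ι} [l.IsCountablyGenerated] {h : ι → K → K}
  [NormedAddCommGroup E]

theorem tendsto_eLpNorm_sub_comp_of_continuous (hp : p ≠ ∞) (hh : ∀ i, AEMeasurable (h i) μ)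
    (hac : ∀ i, μ.map (h i) ≪ μ) (hlim : ∀ᵐ t ∂μ, Tendsto (fun i ↦ h i t) l (𝓝 t)) {g : K → E}
    (hg : Continuous g) (hg_meas : AEStronglyMeasurable g μ) {M : ℝ} (hM : ∀ t, ‖g t‖ ≤ M) :
    Tendsto (fun i ↦ eLpNorm (g - g ∘ h i) p μ) l (𝓝 0) := by
  refine tendsto_eLpNorm_zero_of_norm_le (M := M + M) hp
    (fun i ↦ hg_meas.sub ((hg_meas.mono_ac (hac i)).comp_aemeasurable (hh i)))
    (fun i ↦ .of_forall fun t ↦ norm_sub_le_of_le (hM _) (hM _)) ?_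
  filter_upwards [hlim] with t ht
  simpa using ((hg.tendsto t).comp ht).const_sub (g t)

theorem tendsto_eLpNorm_sub_comp [NormalSpace K] [BorelSpace K] [μ.WeaklyRegular]
    [NormedSpace ℝ E] (hp_one : 1 ≤ p) (hp : p ≠ ∞) (hC : C ≠ ∞) (hh : ∀ i, AEMeasurable (h i) μ)
    (hjac : ∀ i, μ.map (h i) ≤ C • μ) (hlim : ∀ᵐ t ∂μ, Tendsto (fun i ↦ h i t) l (𝓝 t))
    {f : K → E} (hf : MemLp f p μ) :
    Tendsto (fun i ↦ eLpNorm (f - f ∘ h i) p μ) l (𝓝 0) := by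
  refine ENNReal.tendsto_nhds_zero.2 fun ε hε ↦ ?_
  set c := C ^ (1 / p).toReal
  have hc : c ≠ ∞ := ENNReal.rpow_ne_top_of_nonneg ENNReal.toReal_nonneg hC
  set δ := ε / (2 + c)
  have hδ : 0 < δ := ENNReal.div_pos hε.ne' (by finiteness)
  have hac (i : ι) : μ.map (h i) ≪ μ := Measure.absolutelyContinuous_of_le_smul (hjac i)
  obtain ⟨g, hfg, hg⟩ := hf.exists_boundedContinuous_eLpNorm_sub_le hp hδ.ne'
  have hg_comp := 
    tendsto_eLpNorm_sub_comp_of_continuous hp hh hac hlim g.continuous hg.1 g.norm_coe_le_norm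
  filter_upwards [ENNReal.tendsto_nhds_zero.1 hg_comp δ hδ] with i hi
  have hfg_meas : AEStronglyMeasurable (f - ⇑g) μ := hf.1.sub hg.1
  have hcomp {u : K → E} (hu : AEStronglyMeasurable u μ) : AEStronglyMeasurable (u ∘ h i) μ :=
    (hu.mono_ac (hac i)).comp_aemeasurable (hh i)
  have hsub : AEStronglyMeasurable (⇑g - g ∘ h i) μ := hg.1.sub (hcomp hg.1)
  calc eLpNorm (f - f ∘ h i) p μ
      = eLpNorm (((f - ⇑g) + (⇑g - g ∘ h i)) - (f - ⇑g) ∘ h i) p μ := by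
        congr 1
        ext t
        simp
    _ ≤ eLpNorm (f - ⇑g) p μ + eLpNorm (⇑g - g ∘ h i) p μ + eLpNorm ((f - ⇑g) ∘ h i) p μ := by
        grw [eLpNorm_sub_le (hfg_meas.add hsub) (hcomp hfg_meas) hp_one,
          eLpNorm_add_le hfg_meas hsub hp_one]
    _ ≤ δ + δ + c * δ := by
        grw [eLpNorm_comp_le_of_map_le_smul (hh i) (hjac i) hfg_meas, hi, hfg]
    _ = (2 + c) * δ := by ring
    _ ≤ ε := ENNReal.mul_div_le

end Composition

section Isometry

variable {L : Type*} [PseudoMetricSpace L]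

/-- The Kuratowski (Fréchet) embedding of a metric space `L` with base point `x₀` into the Banach
space of bounded functions on `L`, sending `x` to `y ↦ dist x y - dist x₀ y`. Subtracting the
distance to `x₀` makes these functions bounded even when `L` is not. -/
noncomputable def distEmbedding (x₀ x : L) : L →ᵇ ℝ :=
  .ofNormedAddCommGroup (fun y ↦ dist x y - dist x₀ y) (by fun_prop) (dist x x₀)
    fun y ↦ abs_dist_sub_le x x₀ y

theorem isometry_distEmbedding (x₀ : L) : Isometry (distEmbedding x₀) := by
  refine .of_dist_eq fun x y ↦ le_antisymm ?_ ?_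
  · refine (BoundedContinuousFunction.dist_le dist_nonneg).2 fun z ↦ ?_
    simpa [distEmbedding, Real.dist_eq] using abs_dist_sub_le x y z
  · simpa [distEmbedding, Real.dist_eq] using
      (distEmbedding x₀ x).dist_coe_le_dist (g := distEmbedding x₀ y) y

theorem norm_distEmbedding (x₀ x : L) : ‖distEmbedding x₀ x‖ = dist x x₀ := by
  have hzero : distEmbedding x₀ x₀ = 0 := by
    ext y
    simp [distEmbedding]
  rw [← (isometry_distEmbedding x₀).dist_eq, hzero, dist_zero_right]

end Isometry

section Metric

variable {K L ι : Type*} [TopologicalSpace K] [MeasurableSpace K] [BorelSpace K]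
  [PseudoMetricSpace L] {μ : Measure K} [IsFiniteMeasure μ]
  {p C : ℝ≥0∞} {l : Filter ι} [l.IsCountablyGenerated] {h : ι → K → K} {ψ : K → L} {x₀ : L}

theorem tendsto_eLpNorm_dist_comp [NormalSpace K] [μ.WeaklyRegular] (hp_one : 1 ≤ p) (hp : p ≠ ∞)
    (hC : C ≠ ∞) (hh : ∀ i, AEMeasurable (h i) μ)
    (hjac : ∀ i, μ.map (h i) ≤ C • μ) (hlim : ∀ᵐ t ∂μ, Tendsto (fun i ↦ h i t) l (𝓝 t))
    (hψ : AEStronglyMeasurable ψ μ) (hψp : MemLp (fun t ↦ dist (ψ t) x₀) p μ) :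
    Tendsto (fun i ↦ eLpNorm (fun t ↦ dist (ψ t) (ψ (h i t))) p μ) l (𝓝 0) := by
  have hmem : MemLp (fun t ↦ distEmbedding x₀ (ψ t)) p μ :=
    hψp.congr_norm ((isometry_distEmbedding x₀).continuous.comp_aestronglyMeasurable hψ)
      (.of_forall fun t ↦ by simp [norm_distEmbedding])
  refine (tendsto_eLpNorm_sub_comp hp_one hp hC hh hjac hlim hmem).congr fun i ↦ ?_
  refine eLpNorm_congr_norm_ae (.of_forall fun t ↦ ?_)
  simp [← dist_eq_norm, (isometry_distEmbedding x₀).dist_eq]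

theorem tendsto_eLpNorm_dist_perturbed_comp [NormalSpace K] [μ.WeaklyRegular] (hp_one : 1 ≤ p)
    (hp : p ≠ ∞) (hC : C ≠ ∞) {H : ι → K → L → L}
    (hH : ∀ ε > 0, ∀ᶠ i in l, ∀ t x, dist (H i t x) x < ε) (hh : ∀ i, AEMeasurable (h i) μ)
    (hjac : ∀ i, μ.map (h i) ≤ C • μ) (hlim : ∀ᵐ t ∂μ, Tendsto (fun i ↦ h i t) l (𝓝 t))
    (hψ : AEStronglyMeasurable ψ μ) (hψp : MemLp (fun t ↦ dist (ψ t) x₀) p μ) :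
    Tendsto (fun i ↦ eLpNorm (fun t ↦ dist (ψ t) (H i t (ψ (h i t)))) p μ) l (𝓝 0) := by
  refine ENNReal.tendsto_nhds_zero.2 fun δ hδ ↦ ?_
  have hδ₂ : 0 < δ / 2 := ENNReal.half_pos hδ.ne'
  obtain ⟨ε, hε, hεδ⟩ := ENNReal.exists_nnreal_pos_mul_lt
    (a := μ univ ^ p.toReal⁻¹) (by finiteness) hδ₂.ne'
  have hconst : eLpNorm (fun _ : K ↦ (ε : ℝ)) p μ ≤ δ / 2 := by
    refine (eLpNorm_le_of_ae_bound (C := ε) (by simp)).trans ?_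
    rw [ENNReal.ofReal_coe_nnreal, mul_comm]
    exact hεδ.le
  have hcomp := tendsto_eLpNorm_dist_comp hp_one hp hC hh hjac hlim hψ hψp
  filter_upwards [ENNReal.tendsto_nhds_zero.1 hcomp (δ / 2) hδ₂, hH ε hε] with i hi hHi
  have hψ_comp : AEStronglyMeasurable (fun t ↦ ψ (h i t)) μ :=
    (hψ.mono_ac (Measure.absolutelyContinuous_of_le_smul (hjac i))).comp_aemeasurable (hh i)
  calc eLpNorm (fun t ↦ dist (ψ t) (H i t (ψ (h i t)))) p μ
      ≤ eLpNorm ((fun t ↦ dist (ψ t) (ψ (h i t))) + fun _ ↦ (ε : ℝ)) p μ := by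
        refine eLpNorm_mono_real fun t ↦ ?_
        rw [Real.norm_of_nonneg dist_nonneg]
        exact (dist_triangle_right _ _ _).trans (add_le_add_right (hHi t _).le _)
    _ ≤ δ / 2 + δ / 2 := by
        grw [eLpNorm_add_le (hψ.dist hψ_comp) aestronglyMeasurable_const hp_one, hi, hconst]
    _ = δ := ENNReal.add_halves δ

theorem stmt_12_general [MetrizableSpace K] [μ.InnerRegularCompactLTTop] [MeasurableSpace L]
    [BorelSpace L] (hp_one : 1 ≤ p) (hp : p ≠ ∞) (hC : C ≠ ∞) {H : ι → K → L → L}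
    (hH : ∀ ε > 0, ∀ᶠ i in l, ∀ t x, dist (H i t x) x < ε) (hh : ∀ i, AEMeasurable (h i) μ)
    (hjac : ∀ i, μ.map (h i) ≤ C • μ) (hlim : ∀ᵐ t ∂μ, Tendsto (fun i ↦ h i t) l (𝓝 t))
    (hψ : Measurable ψ) (hψp : MemLp (fun t ↦ dist (ψ t) x₀) p μ) :
    Tendsto (fun i ↦ eLpNorm (fun t ↦ dist (ψ t) (H i t (ψ (h i t)))) p μ) l (𝓝 0) :=
  tendsto_eLpNorm_dist_perturbed_comp hp_one hp hC hH hh hjac hlim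
    (aestronglyMeasurable_of_measurable_of_metrizable μ hψ) hψp

end Metric

/-- Key lemma: if `H_{j,t} → id` uniformly, `h_j → id` uniformly, and the Jacobians of the
`h_j` with respect to the regular probability measure `μ` on the (normal) metric space `K`
are uniformly bounded, then for every bounded measurable `ψ : K → L` into a geodesically
convex metric space `L`, `∫ dist(ψ(t), H_{j,t}(ψ(h_j(t)))) dμ(t) → 0`. -/
theorem stmt_12 {L K : Type*} [MetricSpace L] [MeasurableSpace L] [BorelSpace L]
    [MetricSpace K] [MeasurableSpace K] [BorelSpace K]
    (μ : Measure K) [IsProbabilityMeasure μ] [μ.Regular]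
    (hconv : ∃ τ : ℝ, 1 ≤ τ ∧ ∀ u v : L, ∃ γ : ℝ → L,
      ContinuousOn γ (Icc 0 1) ∧ γ 0 = u ∧ γ 1 = v ∧
      ∀ s ∈ Icc (0:ℝ) 1, ∀ t ∈ Icc (0:ℝ) 1, dist (γ s) (γ t) ≤ τ * dist u v)
    (H : ℕ → K → L → L) (h : ℕ → K → K)
    (hhmeas : ∀ j, Measurable (h j))
    (hHconv : ∀ ε > 0, ∃ J, ∀ j ≥ J, ∀ (t : K) (x : L), dist (H j t x) x < ε)
    (hhconv : ∀ ε > 0, ∃ J, ∀ j ≥ J, ∀ t : K, dist (h j t) t < ε)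
    (hjac : ∃ C : ℝ≥0∞, C ≠ ⊤ ∧ ∀ j, ∀ φ : K → ℝ≥0∞, Measurable φ →
      ∫⁻ t, φ (h j t) ∂μ ≤ C * ∫⁻ t, φ t ∂μ)
    (ψ : K → L) (hψ : Measurable ψ) (hψbdd : Bornology.IsBounded (range ψ)) :
    Tendsto (fun j => ∫⁻ t, ENNReal.ofReal (dist (ψ t) (H j t (ψ (h j t)))) ∂μ)
      atTop (nhds 0) := by
  obtain ⟨C, hC, hjac⟩ := hjac
  obtain ⟨t₀⟩ : Nonempty K := μ.nonempty_of_neZero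
  have hlim (t : K) : Tendsto (fun j ↦ h j t) atTop (𝓝 t) :=
    Metric.tendsto_atTop.2 fun ε hε ↦ (hhconv ε hε).imp fun J hJ j hj ↦ hJ j hj t
  have hψ_mem : MemLp (fun t ↦ dist (ψ t) (ψ t₀)) 1 μ :=
    memLp_dist_of_isBounded_range (aestronglyMeasurable_of_measurable_of_metrizable μ hψ) hψbdd _
  simpa [eLpNorm_one_eq_lintegral_enorm, Real.enorm_of_nonneg dist_nonneg] using
    stmt_12_general le_rfl ENNReal.one_ne_top hC (fun ε hε ↦ eventually_atTop.2 (hHconv ε hε))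
      (fun j ↦ (hhmeas j).aemeasurable)
      (fun j ↦ map_le_smul_of_lintegral_comp_le (hhmeas j) (hjac j)) (.of_forall hlim) hψ hψ_mem
end

section
/- Let (X, 𝔅, μ) be a complete probability space, Y a separable complete metric space with Borel σ-algebra 𝔅(Y), and κ(Y) the space of nonempty compact subsets of Y with the Hausdorff topology. For a map x ↦ K_x from X to κ(Y), the following are equivalent: (1) x ↦ K_x is measurable; (2) its graph {(x,y) ∈ X × Y : y ∈ K_x} belongs to 𝔅 ⊗ 𝔅(Y); (3) {x ∈ X : K_x ∩ U ≠ ∅} ∈ 𝔅 for every open U ⊂ Y. Moreover, any of these conditions implies the existence of a measurable map s : X → Y with s(x) ∈ K_x for every x ∈ X. -/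
open MeasureTheory TopologicalSpace

/-- Borel σ-algebra on the space of nonempty compact subsets with the Hausdorff metric. -/
noncomputable instance {Y : Type*} [MetricSpace Y] :
    MeasurableSpace (NonemptyCompacts Y) := borel _

/-!
The topology of `NonemptyCompacts Y` is generated by the conditions `K ∩ U ≠ ∅` and `K ⊆ U` with
`U` open, and `K ⊆ U` says that `K` misses the closed set `Uᶜ`. A compact set meets a closed set as
soon as it meets all thickenings of it, so the hitting sets of open sets decide measurability.

If the graph is measurable, the hitting set of `U` is the projection of a measurable subset of
`X × Y`. Such a subset depends on its first coordinate only through a measurable map into the Cantor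
space, where the projection becomes analytic. Analytic sets are null measurable for every s-finite
Borel measure, and completeness of `μ` makes null measurable sets measurable.

A selection is found by intersecting `K x` successively with the first closed ball of radius
`1 / (n + 1)`, centred in a fixed dense sequence, that meets what is left: the chosen centres depend
measurably on `x` and converge to a point of `K x`.
-/

open Set Filter Topology

section AnalyticSets

/-- The sequences of natural numbers whose first `k` terms are bounded by those of `n`. As `k`
grows these sets decrease to the compact set `Set.Iic n`. -/
def prefixBox (n : ℕ → ℕ) (k : ℕ) : Set (ℕ → ℕ) :=
  {x | ∀ i < k, x i ≤ n i}

lemma prefixBox_zero (n : ℕ → ℕ) : prefixBox n 0 = univ := by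
  simp [prefixBox]

lemma prefixBox_succ (n : ℕ → ℕ) (k : ℕ) :
    prefixBox n (k + 1) = prefixBox n k ∩ {x | x k ≤ n k} := by
  ext x
  exact Nat.forall_lt_succ_right

lemma antitone_prefixBox (n : ℕ → ℕ) : Antitone (prefixBox n) :=
  fun _ _ hkl _ hx i hi => hx i (hi.trans_le hkl)

lemma isCompact_Iic_nat_pi (n : ℕ → ℕ) : IsCompact (Iic n) := by
  rw [← Icc_bot]
  exact isCompact_Icc

lemma exists_forall_cylinder_subset_of_isCompact {E : ℕ → Type*} [∀ n, TopologicalSpace (E n)]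
    [∀ n, DiscreteTopology (E n)] {K V : Set (∀ n, E n)} (hK : IsCompact K) (hV : IsOpen V)
    (hKV : K ⊆ V) : ∃ k, ∀ y ∈ K, PiNat.cylinder y k ⊆ V := by
  refine hK.induction_on (p := fun s => ∃ k, ∀ y ∈ s, PiNat.cylinder y k ⊆ V) ?_ ?_ ?_ ?_
  · exact ⟨0, fun _ hy => hy.elim⟩
  · exact fun s t hst ⟨k, hk⟩ => ⟨k, fun y hy => hk y (hst hy)⟩
  · rintro s t ⟨k, hk⟩ ⟨l, hl⟩
    refine ⟨max k l, fun y hy => hy.elim (fun hs => ?_) (fun ht => ?_)⟩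
    · exact (PiNat.cylinder_anti y (le_max_left k l)).trans (hk y hs)
    · exact (PiNat.cylinder_anti y (le_max_right k l)).trans (hl y ht)
  · intro x hx
    obtain ⟨_, ⟨y, k, rfl⟩, hxy, hyV⟩ :=
      (PiNat.isTopologicalBasis_cylinders E).exists_subset_of_mem_open (hKV hx) hV
    refine ⟨PiNat.cylinder y k,
      mem_nhdsWithin_of_mem_nhds ((PiNat.isOpen_cylinder E y k).mem_nhds hxy), k, fun z hz => ?_⟩
    rwa [PiNat.mem_cylinder_iff_eq.1 hz]

lemma exists_prefixBox_subset_of_isOpen {n : ℕ → ℕ} {V : Set (ℕ → ℕ)} (hV : IsOpen V)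
    (hn : Iic n ⊆ V) : ∃ k, prefixBox n k ⊆ V := by
  obtain ⟨k, hk⟩ := exists_forall_cylinder_subset_of_isCompact (isCompact_Iic_nat_pi n) hV hn
  refine ⟨k, fun x hx => hk (x ⊓ n) (mem_Iic.2 inf_le_right) ?_⟩
  exact PiNat.mem_cylinder_iff.2 fun i hi => (min_eq_left (hx i hi)).symm

lemma iInter_closure_image_prefixBox_subset {Z : Type*} [TopologicalSpace Z] [T2Space Z]
    {g : (ℕ → ℕ) → Z} (hg : Continuous g) (n : ℕ → ℕ) :
    ⋂ k, closure (g '' prefixBox n k) ⊆ g '' Iic n := by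
  intro z hz
  by_contra hzn
  obtain ⟨U, V, hU, hV, hnU, hzV, hUV⟩ :=
    ((isCompact_Iic_nat_pi n).image hg).separation_of_notMem hzn
  obtain ⟨k, hk⟩ := exists_prefixBox_subset_of_isOpen (hU.preimage hg) (image_subset_iff.1 hnU)
  obtain ⟨w, hwV, hwk⟩ := mem_closure_iff.1 (mem_iInter.1 hz k) V hV hzV
  exact disjoint_left.1 hUV (image_subset_iff.2 hk hwk) hwV

lemma exists_lt_measure_image_inter_le {α Z : Type*} [MeasurableSpace Z] {ν : Measure Z}
    (g : α → Z) (f : α → ℕ) {S : Set α} {r : ENNReal} (hr : r < ν (g '' S)) :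
    ∃ m, r < ν (g '' (S ∩ {x | f x ≤ m})) := by
  have hmono : Monotone fun m => g '' (S ∩ {x | f x ≤ m}) := fun m m' hmm =>
    image_mono (inter_subset_inter_right S fun _ hx => le_trans hx hmm)
  have hS : ⋃ m, g '' (S ∩ {x | f x ≤ m}) = g '' S := by
    rw [← image_iUnion, ← inter_iUnion, iUnion_eq_univ_iff.2 fun x => ⟨f x, le_refl (f x)⟩,
      inter_univ]
  rwa [← hS, hmono.measure_iUnion, lt_iSup_iff] at hr

lemma exists_forall_lt_measure_image_prefixBox {Z : Type*} [MeasurableSpace Z] {ν : Measure Z}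
    (g : (ℕ → ℕ) → Z) {r : ENNReal} (hr : r < ν (range g)) :
    ∃ n, ∀ k, r < ν (g '' prefixBox n k) := by
  choose m hm using fun (k : ℕ) (S : {S : Set (ℕ → ℕ) // r < ν (g '' S)}) =>
    exists_lt_measure_image_inter_le g (fun x => x k) S.2
  let T : ℕ → {S : Set (ℕ → ℕ) // r < ν (g '' S)} := Nat.rec ⟨univ, by rwa [image_univ]⟩
    fun k S => ⟨S.1 ∩ {x | x k ≤ m k S}, hm k S⟩
  have hT : ∀ k, (T k).1 = prefixBox (fun i => m i (T i)) k := by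
    intro k
    induction k with
    | zero => exact (prefixBox_zero _).symm
    | succ k ih => rw [prefixBox_succ, ← ih]
  exact ⟨fun i => m i (T i), fun k => hT k ▸ (T k).2⟩

lemma exists_isCompact_subset_range_le_measure {Z : Type*} [TopologicalSpace Z] [T2Space Z]
    [MeasurableSpace Z] [OpensMeasurableSpace Z] {ν : Measure Z} [IsFiniteMeasure ν]
    {g : (ℕ → ℕ) → Z} (hg : Continuous g) {r : ENNReal} (hr : r < ν (range g)) :
    ∃ L ⊆ range g, IsCompact L ∧ r ≤ ν L := by
  obtain ⟨n, hn⟩ := exists_forall_lt_measure_image_prefixBox g hr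
  refine ⟨g '' Iic n, image_subset_range g _, (isCompact_Iic_nat_pi n).image hg, ?_⟩
  have hanti : Antitone fun k => closure (g '' prefixBox n k) := fun _ _ hkl =>
    closure_mono (image_mono (antitone_prefixBox n hkl))
  calc r ≤ ⨅ k, ν (closure (g '' prefixBox n k)) :=
        le_iInf fun k => (hn k).le.trans (measure_mono subset_closure)
    _ = ν (⋂ k, closure (g '' prefixBox n k)) :=
        (hanti.measure_iInter (fun _ => isClosed_closure.nullMeasurableSet)
          ⟨0, measure_ne_top ν _⟩).symm
    _ ≤ ν (g '' Iic n) := measure_mono (iInter_closure_image_prefixBox_subset hg n)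

lemma nullMeasurableSet_of_forall_lt_measure {Z : Type*} [MeasurableSpace Z] {ν : Measure Z}
    {A : Set Z} (hA : ν A ≠ ⊤)
    (h : ∀ r < ν A, ∃ L ⊆ A, MeasurableSet L ∧ r ≤ ν L) : NullMeasurableSet A ν := by
  rcases eq_or_ne (ν A) 0 with hzero | hne
  · exact NullMeasurableSet.of_null hzero
  obtain ⟨r, -, hr, hrlim⟩ := exists_seq_strictMono_tendsto' (pos_iff_ne_zero.2 hne)
  choose L hLA hL hrL using fun j => h (r j) (hr j).2
  have hunion : MeasurableSet (⋃ j, L j) := MeasurableSet.iUnion hL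
  have hle : ν A ≤ ν (⋃ j, L j) :=
    le_of_tendsto' hrlim fun j => (hrL j).trans (measure_mono (subset_iUnion L j))
  exact hunion.nullMeasurableSet.congr
    (ae_eq_of_subset_of_measure_ge (iUnion_subset hLA) hle hunion.nullMeasurableSet hA)

theorem nullMeasurableSet_of_analyticSet {Z : Type*} [TopologicalSpace Z] [T2Space Z]
    [MeasurableSpace Z] [OpensMeasurableSpace Z] {A : Set Z} (hA : AnalyticSet A)
    (ν : Measure Z) [SFinite ν] : NullMeasurableSet A ν := by
  suffices NullMeasurableSet A ν.toFinite from this.mono_ac (absolutelyContinuous_toFinite ν)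
  rw [AnalyticSet] at hA
  rcases hA with rfl | ⟨g, hg, rfl⟩
  · exact nullMeasurableSet_empty
  refine nullMeasurableSet_of_forall_lt_measure (measure_ne_top _ _) fun r hr => ?_
  obtain ⟨L, hLg, hL, hrL⟩ := exists_isCompact_subset_range_le_measure hg hr
  exact ⟨L, hLg, hL.measurableSet, hrL⟩

end AnalyticSets

section Projection

variable {X Y : Type*} [MeasurableSpace X] [MeasurableSpace Y]

lemma exists_measurable_cantor_preimage_eq {S : Set (X × Y)} (hS : MeasurableSet S) :
    ∃ f : X → ℕ → Bool, Measurable f ∧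
      ∃ S' : Set ((ℕ → Bool) × Y), MeasurableSet S' ∧ Prod.map f id ⁻¹' S' = S := by
  classical
  induction S, hS using MeasurableSpace.induction_on_inter generateFrom_prod.symm isPiSystem_prod
    with
  | empty => exact ⟨fun _ _ => true, measurable_const, ∅, .empty, preimage_empty⟩
  | basic _ hrect =>
    obtain ⟨A, hA, B, hB, rfl⟩ := hrect
    refine ⟨fun x _ => decide (x ∈ A), measurable_pi_lambda _ fun _ => ?_,
      {z | z 0 = true} ×ˢ B, ?_, ?_⟩
    · exact measurable_to_bool (by simpa [preimage] using! hA)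
    · exact .prod
        (measurable_pi_apply (X := fun _ : ℕ => Bool) 0 (measurableSet_singleton true)) hB
    · ext ⟨x, y⟩
      simp
  | compl _ _ ih =>
    obtain ⟨f, hf, S', hS', rfl⟩ := ih
    exact ⟨f, hf, S'ᶜ, hS'.compl, preimage_compl⟩
  | iUnion S _ _ ih =>
    choose f hf S' hS' hfS using ih
    let proj (n : ℕ) (z : ℕ → Bool) : ℕ → Bool := fun m => z (Nat.pair n m)
    have hproj (n : ℕ) : Measurable (proj n) :=
      measurable_pi_lambda _ fun m => measurable_pi_apply (Nat.pair n m)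
    refine ⟨fun x k => f k.unpair.1 x k.unpair.2,
      measurable_pi_lambda _ fun k => (measurable_pi_apply _).comp (hf _),
      ⋃ n, Prod.map (proj n) id ⁻¹' S' n,
      .iUnion fun n => ((hproj n).prodMap measurable_id) (hS' n), ?_⟩
    rw [preimage_iUnion]
    refine iUnion_congr fun n => ?_
    rw [← hfS n, ← preimage_comp]
    congr 1
    ext ⟨x, y⟩ <;> simp [proj]

theorem measurableSet_image_fst_of_isComplete (μ : Measure X) [SFinite μ] [μ.IsComplete]
    [StandardBorelSpace Y] {S : Set (X × Y)} (hS : MeasurableSet S) :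
    MeasurableSet (Prod.fst '' S) := by
  obtain ⟨f, hf, S', hS', rfl⟩ := exists_measurable_cantor_preimage_eq hS
  have himage : Prod.fst '' (Prod.map f id ⁻¹' S') = f ⁻¹' (Prod.fst '' S') := by
    ext x
    simp
  have hanalytic : AnalyticSet (Prod.fst '' S') := hS'.analyticSet_image measurable_fst
  rw [himage]
  exact ((nullMeasurableSet_of_analyticSet hanalytic (μ.map f)).preimage
    (hf.quasiMeasurePreserving μ)).measurable_of_complete

end Projection

lemma measurableSet_inter_isClosed_nonempty {X Y : Type*} [MeasurableSpace X]
    [PseudoEMetricSpace Y] {K : X → Set Y} (hK : ∀ x, IsCompact (K x))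
    (h : ∀ U, IsOpen U → MeasurableSet {x | (K x ∩ U).Nonempty}) {F : Set Y} (hF : IsClosed F) :
    MeasurableSet {x | (K x ∩ F).Nonempty} := by
  have hiInter : {x | (K x ∩ F).Nonempty} =
      ⋂ n : ℕ, {x | (K x ∩ Metric.thickening (1 / ((n : ℝ) + 1)) F).Nonempty} := by
    refine subset_antisymm (subset_iInter fun n x hx => ?_) fun x hx => ?_
    · exact hx.mono (inter_subset_inter_right _
        (Metric.self_subset_thickening Nat.one_div_pos_of_nat F))
    · by_contra hdisj
      obtain ⟨δ, hδ, hdisj⟩ :=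
        (disjoint_iff_inter_eq_empty.2 (not_nonempty_iff_eq_empty.1 hdisj)).exists_thickenings
          (hK x) hF
      obtain ⟨n, hn⟩ := exists_nat_one_div_lt hδ
      obtain ⟨y, hyK, hyF⟩ := mem_iInter.1 hx n
      exact disjoint_left.1 hdisj (Metric.self_subset_thickening hδ _ hyK)
        (Metric.thickening_mono hn.le F hyF)
  rw [hiInter]
  exact .iInter fun n => h _ Metric.isOpen_thickening

section NonemptyCompacts

variable {X Y : Type*} [MeasurableSpace X] [MetricSpace Y]

instance instBorelSpaceNonemptyCompacts : BorelSpace (NonemptyCompacts Y) := ⟨rfl⟩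

lemma borel_nonemptyCompacts_eq_generateFrom [SeparableSpace Y] :
    borel (NonemptyCompacts Y) = .generateFrom
      (preimage (↑) '' (powerset '' {U : Set Y | IsOpen U} ∪
        (fun U => {s | (s ∩ U).Nonempty}) '' {U : Set Y | IsOpen U})) :=
  have := UniformSpace.secondCountable_of_separable Y
  borel_eq_generateFrom_of_subbasis induced_generateFrom_eq

theorem measurable_iff_measurableSet_inter_isOpen_nonempty [SeparableSpace Y]
    {K : X → NonemptyCompacts Y} :
    Measurable K ↔ ∀ U, IsOpen U → MeasurableSet {x | ((K x : Set Y) ∩ U).Nonempty} := by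
  refine ⟨fun hK U hU => hK (NonemptyCompacts.isOpen_inter_nonempty_of_isOpen hU).measurableSet,
    fun h => ?_⟩
  rw [BorelSpace.measurable_eq (α := NonemptyCompacts Y), borel_nonemptyCompacts_eq_generateFrom]
  refine measurable_generateFrom ?_
  rintro _ ⟨_, ⟨U, hU, rfl⟩ | ⟨U, hU, rfl⟩, rfl⟩
  · have hmiss : K ⁻¹' ((↑) ⁻¹' 𝒫 U) = {x | ((K x : Set Y) ∩ Uᶜ).Nonempty}ᶜ := by
      ext x
      simp [inter_compl_nonempty_iff]
    rw [hmiss]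
    exact (measurableSet_inter_isClosed_nonempty (fun x => (K x).isCompact) h
      hU.isClosed_compl).compl
  · exact h U hU

theorem measurable_iff_measurableSet_inter_isClosed_nonempty [SeparableSpace Y]
    {K : X → NonemptyCompacts Y} :
    Measurable K ↔ ∀ F, IsClosed F → MeasurableSet {x | ((K x : Set Y) ∩ F).Nonempty} := by
  refine ⟨fun hK F hF => hK (NonemptyCompacts.isClosed_inter_nonempty_of_isClosed hF).measurableSet,
    fun h => measurable_iff_measurableSet_inter_isOpen_nonempty.2 fun U hU => ?_⟩
  obtain ⟨F, hF, -, rfl, -⟩ := hU.exists_iUnion_isClosed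
  simp only [inter_iUnion, nonempty_iUnion, ofPred_exists]
  exact .iUnion fun n => h (F n) (hF n)

lemma isClosed_setOf_mem_nonemptyCompacts :
    IsClosed {p : NonemptyCompacts Y × Y | p.2 ∈ (p.1 : Set Y)} := by
  have heq : {p : NonemptyCompacts Y × Y | p.2 ∈ (p.1 : Set Y)} =
      {p | Metric.infDist p.2 (p.1 : Set Y) = 0} := by
    ext p
    exact p.1.isCompact.isClosed.mem_iff_infDist_zero p.1.nonempty
  rw [heq]
  have hcont : Continuous
      ((fun p : Y × NonemptyCompacts Y => Metric.infDist p.1 (p.2 : Set Y)) ∘ Prod.swap) :=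
    Metric.lipschitz_infDist.continuous.comp continuous_swap
  exact isClosed_eq hcont continuous_const

theorem measurableSet_graph_of_measurable [SeparableSpace Y] [MeasurableSpace Y] [BorelSpace Y]
    {K : X → NonemptyCompacts Y} (hK : Measurable K) :
    MeasurableSet {p : X × Y | p.2 ∈ (K p.1 : Set Y)} := by
  have := UniformSpace.secondCountable_of_separable Y
  exact (hK.prodMap measurable_id) isClosed_setOf_mem_nonemptyCompacts.measurableSet

theorem measurable_of_measurableSet_graph (μ : Measure X) [SFinite μ] [μ.IsComplete]
    [SeparableSpace Y] [MeasurableSpace Y] [BorelSpace Y] [StandardBorelSpace Y]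
    {K : X → NonemptyCompacts Y} (hK : MeasurableSet {p : X × Y | p.2 ∈ (K p.1 : Set Y)}) :
    Measurable K := by
  refine measurable_iff_measurableSet_inter_isOpen_nonempty.2 fun U hU => ?_
  have hproj : {x | ((K x : Set Y) ∩ U).Nonempty} =
      Prod.fst '' ({p : X × Y | p.2 ∈ (K p.1 : Set Y)} ∩ Prod.snd ⁻¹' U) := by
    ext x
    simp [Set.Nonempty]
  rw [hproj]
  exact measurableSet_image_fst_of_isComplete μ (hK.inter (measurable_snd hU.measurableSet))

lemma measurable_of_coe_eq_inter_isClosed [SeparableSpace Y] {ι : Type*} [Countable ι]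
    [MeasurableSpace ι] [MeasurableSingletonClass ι] {K L : X → NonemptyCompacts Y}
    (hK : Measurable K) {F : ι → Set Y} (hF : ∀ i, IsClosed (F i)) {J : X → ι} (hJ : Measurable J)
    (hL : ∀ x, (L x : Set Y) = (K x : Set Y) ∩ F (J x)) : Measurable L := by
  refine measurable_iff_measurableSet_inter_isClosed_nonempty.2 fun C hC => ?_
  have hiUnion : {x | ((L x : Set Y) ∩ C).Nonempty} =
      ⋃ i, J ⁻¹' {i} ∩ {x | ((K x : Set Y) ∩ (F i ∩ C)).Nonempty} := by
    ext x
    simp [hL, inter_assoc]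
  rw [hiUnion]
  exact .iUnion fun i => (hJ (measurableSet_singleton i)).inter
    (measurable_iff_measurableSet_inter_isClosed_nonempty.1 hK _ ((hF i).inter hC))

lemma exists_measurable_subset_inter_closedBall [SeparableSpace Y] [Nonempty Y]
    [MeasurableSpace Y] {K : X → NonemptyCompacts Y} (hK : Measurable K) {ε : ℝ} (hε : 0 < ε) :
    ∃ (L : X → NonemptyCompacts Y) (u : X → Y), Measurable L ∧ Measurable u ∧
      ∀ x, (L x : Set Y) ⊆ (K x : Set Y) ∩ Metric.closedBall (u x) ε := by
  classical
  let q := denseSeq Y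
  have hhit : ∀ x, ∃ j, ((K x : Set Y) ∩ Metric.closedBall (q j) ε).Nonempty := by
    intro x
    obtain ⟨y, hy⟩ := (K x).nonempty
    obtain ⟨j, hj⟩ := (denseRange_denseSeq Y).exists_dist_lt y hε
    exact ⟨j, y, hy, hj.le⟩
  let J (x : X) : ℕ := Nat.find (hhit x)
  have hJ : Measurable J := measurable_find hhit fun j =>
    measurable_iff_measurableSet_inter_isClosed_nonempty.1 hK _ Metric.isClosed_closedBall
  let L (x : X) : NonemptyCompacts Y :=
    ⟨⟨(K x : Set Y) ∩ Metric.closedBall (q (J x)) ε,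
      (K x).isCompact.inter_right Metric.isClosed_closedBall⟩,
      Nat.find_spec (hhit x)⟩
  have hL : Measurable L := measurable_of_coe_eq_inter_isClosed hK
    (F := fun j => Metric.closedBall (q j) ε) (fun _ => Metric.isClosed_closedBall) hJ fun _ => rfl
  exact ⟨L, q ∘ J, hL, measurable_from_nat.comp hJ, fun _ => subset_rfl⟩

theorem exists_measurable_forall_mem [SeparableSpace Y] [MeasurableSpace Y] [BorelSpace Y]
    {K : X → NonemptyCompacts Y} (hK : Measurable K) :
    ∃ s : X → Y, Measurable s ∧ ∀ x, s x ∈ (K x : Set Y) := by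
  rcases isEmpty_or_nonempty Y with hY | hY
  · exact ⟨fun x => (K x).nonempty.some, measurable_of_subsingleton_codomain _,
      fun x => (K x).nonempty.some_mem⟩
  choose next center hnext hcenter hsub using
    fun (n : ℕ) (K : {K : X → NonemptyCompacts Y // Measurable K}) =>
      exists_measurable_subset_inter_closedBall K.2 (Nat.one_div_pos_of_nat (α := ℝ) (n := n))
  let T : ℕ → {K : X → NonemptyCompacts Y // Measurable K} :=
    Nat.rec ⟨K, hK⟩ fun n K => ⟨next n K, hnext n K⟩
  have hT (n : ℕ) (x : X) : ((T (n + 1)).1 x : Set Y) ⊆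
      ((T n).1 x : Set Y) ∩ Metric.closedBall (center n (T n) x) (1 / ((n : ℝ) + 1)) :=
    hsub n (T n) x
  have hinter (x : X) : (⋂ n, ((T n).1 x : Set Y)).Nonempty :=
    IsCompact.nonempty_iInter_of_sequence_nonempty_isCompact_isClosed _
      (fun n => (hT n x).trans inter_subset_left) (fun n => ((T n).1 x).nonempty)
      ((T 0).1 x).isCompact fun n => ((T n).1 x).isCompact.isClosed
  choose s hs using hinter
  have hlim (x : X) : Tendsto (fun n => center n (T n) x) atTop (𝓝 (s x)) := by
    refine tendsto_iff_dist_tendsto_zero.2 (squeeze_zero (fun _ => dist_nonneg) (fun n => ?_)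
      tendsto_one_div_add_atTop_nhds_zero_nat)
    rw [dist_comm]
    exact (hT n x (mem_iInter.1 (hs x) (n + 1))).2
  exact ⟨s, measurable_of_tendsto_metrizable (fun n => hcenter n (T n)) (tendsto_pi_nhds.2 hlim),
    fun x => mem_iInter.1 (hs x) 0⟩

end NonemptyCompacts

theorem stmt_19_general {X Y : Type*} [MeasurableSpace X]
    (μ : Measure X) [SFinite μ] [μ.IsComplete]
    [MetricSpace Y] [SeparableSpace Y]
    [MeasurableSpace Y] [BorelSpace Y] [StandardBorelSpace Y]
    (Kmap : X → NonemptyCompacts Y) :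
    (Measurable Kmap ↔ MeasurableSet {p : X × Y | p.2 ∈ (Kmap p.1 : Set Y)}) ∧
    (Measurable Kmap ↔ ∀ U : Set Y, IsOpen U →
      MeasurableSet {x : X | ((Kmap x : Set Y) ∩ U).Nonempty}) ∧
    (Measurable Kmap →
      ∃ s : X → Y, Measurable s ∧ ∀ x, s x ∈ (Kmap x : Set Y)) :=
  ⟨⟨measurableSet_graph_of_measurable, measurable_of_measurableSet_graph μ⟩,
    measurable_iff_measurableSet_inter_isOpen_nonempty, exists_measurable_forall_mem⟩

/-- The Castaing–Valadier measurable selection theorem: for a complete probability space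
`(X, 𝔅, μ)` and a separable complete metric space `Y`, and a compact-set-valued map
`x ↦ K_x`, measurability of the map, measurability of its graph, and measurability of all
sets `{x : K_x ∩ U ≠ ∅}` for `U` open are equivalent; and any of them yields a measurable
selection `s` with `s(x) ∈ K_x` for every `x`. -/
theorem stmt_19 {X Y : Type*} [MeasurableSpace X]
    (μ : Measure X) [IsProbabilityMeasure μ] [μ.IsComplete]
    [MetricSpace Y] [SeparableSpace Y] [CompleteSpace Y]
    [MeasurableSpace Y] [BorelSpace Y]
    (Kmap : X → NonemptyCompacts Y) :
    (Measurable Kmap ↔ MeasurableSet {p : X × Y | p.2 ∈ (Kmap p.1 : Set Y)}) ∧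
    (Measurable Kmap ↔ ∀ U : Set Y, IsOpen U →
      MeasurableSet {x : X | ((Kmap x : Set Y) ∩ U).Nonempty}) ∧
    (Measurable Kmap →
      ∃ s : X → Y, Measurable s ∧ ∀ x, s x ∈ (Kmap x : Set Y)) := by
  have := UniformSpace.secondCountable_of_separable Y
  exact stmt_19_general μ Kmap
end
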